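/- For every δ > 0 and R₀ > 0 there exists C > 0, independent of the data, of u and of t, such that the following holds. For every classical solution u of the damped wave equation of class C³(closure(Ω)×[0,∞)) with finite propagation from B(0,R₀) and with ‖(u(·,0), u_t(·,0))‖_{H²×H¹} < ∞, one has for all t ≥ 0: ( ∫_Ω a(x) |u(x,t)|² dx )^{1/2} ≤ C (1+t)^{−(N+α)/(2(2+α)) + δ} ‖(u(·,0), u_t(·,0))‖_{H²×H¹}. Moreover, when N = 2 the same estimate holds with δ = 0. -/

import Mathlib

open MeasureTheory Filter

noncomputable section

/-- The Laplacian `Δφ = ∑ᵢ ∂²φ/∂xᵢ²`. -/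
def lap {N : ℕ} (φ : EuclideanSpace ℝ (Fin N) → ℝ) (x : EuclideanSpace ℝ (Fin N)) : ℝ :=
  ∑ i : Fin N, fderiv ℝ (fun z => fderiv ℝ φ z (EuclideanSpace.single i 1)) x
    (EuclideanSpace.single i 1)

/-- `Ω` has a smooth boundary: near every boundary point, `Ω` is the sublevel set of a
smooth local defining function with nonvanishing differential. -/
def HasSmoothBoundary {N : ℕ} (Ω : Set (EuclideanSpace ℝ (Fin N))) : Prop :=
  ∀ x ∈ frontier Ω, ∃ (U : Set (EuclideanSpace ℝ (Fin N)))
    (f : EuclideanSpace ℝ (Fin N) → ℝ),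
    IsOpen U ∧ x ∈ U ∧ ContDiff ℝ (⊤ : ℕ∞) f ∧ fderiv ℝ f x ≠ 0 ∧
      ∀ y ∈ U, (y ∈ Ω ↔ f y < 0)

/-- A classical solution of class `C^k` of the damped wave equation
`u_tt − Δu + a u_t = 0` on `Ω × (0,∞)`, with Dirichlet boundary condition, whose data are
supported in `B(0,R₀)` and which has finite propagation speed. -/
def IsDampedWaveSolution {N : ℕ} (k : ℕ) (Ω : Set (EuclideanSpace ℝ (Fin N)))
    (a : EuclideanSpace ℝ (Fin N) → ℝ) (R₀ : ℝ)
    (u : EuclideanSpace ℝ (Fin N) → ℝ → ℝ) : Prop :=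
  ContDiff ℝ k (Function.uncurry u) ∧
  (∀ x ∈ Ω, ∀ t > (0 : ℝ),
    deriv (deriv (u x)) t - lap (fun y => u y t) x + a x * deriv (u x) t = 0) ∧
  (∀ x ∈ frontier Ω, ∀ t > (0 : ℝ), u x t = 0) ∧
  tsupport (fun x => u x 0) ⊆ Metric.ball (0 : EuclideanSpace ℝ (Fin N)) R₀ ∧
  tsupport (fun x => deriv (u x) 0) ⊆ Metric.ball (0 : EuclideanSpace ℝ (Fin N)) R₀ ∧
  (∀ t ≥ (0 : ℝ), tsupport (fun x => u x t)
    ⊆ Metric.closedBall (0 : EuclideanSpace ℝ (Fin N)) (R₀ + t))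

/-- The squared Sobolev `H^m(Ω)` norm `∑_{j ≤ m} ∫_Ω |∂^j f|² dx`. -/
def sobNormSq {N : ℕ} (m : ℕ) (Ω : Set (EuclideanSpace ℝ (Fin N)))
    (f : EuclideanSpace ℝ (Fin N) → ℝ) : ℝ :=
  ∑ j ∈ Finset.range (m + 1), ∫ x in Ω, ‖iteratedFDeriv ℝ j f x‖ ^ 2

/-- The partial derivative `∂w/∂xᵢ` of a function of space and time. -/
def dx {N : ℕ} (w : EuclideanSpace ℝ (Fin N) → ℝ → ℝ) (i : Fin N)
    (x : EuclideanSpace ℝ (Fin N)) (t : ℝ) : ℝ :=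
  fderiv ℝ (fun y => w y t) x (EuclideanSpace.single i 1)

/-- The time derivative of a function of space and time. -/
def dt {N : ℕ} (w : EuclideanSpace ℝ (Fin N) → ℝ → ℝ)
    (x : EuclideanSpace ℝ (Fin N)) (t : ℝ) : ℝ :=
  deriv (w x) t

section SpaceTimeCalculus

variable {N : ℕ} {w : EuclideanSpace ℝ (Fin N) → ℝ → ℝ}

lemma contDiff_dx {n m : WithTop ℕ∞} (h : ContDiff ℝ n (Function.uncurry w)) (hm : m + 1 ≤ n)
    (i : Fin N) : ContDiff ℝ m (Function.uncurry (dx w i)) := by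
  have h1 : ContDiff ℝ n (Function.uncurry
      (fun (p : EuclideanSpace ℝ (Fin N) × ℝ) (y : EuclideanSpace ℝ (Fin N)) => w y p.2)) :=
    h.comp (contDiff_snd.prodMk (contDiff_snd.comp contDiff_fst))
  exact ContDiff.fderiv_apply (m := n) h1 contDiff_fst contDiff_const hm

lemma contDiff_dt {n m : WithTop ℕ∞} (h : ContDiff ℝ n (Function.uncurry w)) (hm : m + 1 ≤ n) :
    ContDiff ℝ m (Function.uncurry (dt w)) := by
  have h1 : ContDiff ℝ n (Function.uncurry
      (fun (p : EuclideanSpace ℝ (Fin N) × ℝ) (s : ℝ) => w p.1 s)) :=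
    h.comp ((contDiff_fst.comp contDiff_fst).prodMk contDiff_snd)
  exact ContDiff.fderiv_apply (m := n) h1 contDiff_snd contDiff_const hm

lemma contDiff_slice {n : WithTop ℕ∞} (h : ContDiff ℝ n (Function.uncurry w)) (t : ℝ) :
    ContDiff ℝ n (fun y => w y t) :=
  h.comp (contDiff_id.prodMk contDiff_const)

lemma hasDerivAt_dt (h : ContDiff ℝ 1 (Function.uncurry w)) (x : EuclideanSpace ℝ (Fin N))
    (t : ℝ) : HasDerivAt (w x) (dt w x t) t := by
  have h1 : ContDiff ℝ 1 (w x) := h.comp (contDiff_const.prodMk contDiff_id)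
  exact (h1.differentiable (by simp) t).hasDerivAt

lemma hasDerivAt_dx (h : ContDiff ℝ 1 (Function.uncurry w)) (i : Fin N)
    (x : EuclideanSpace ℝ (Fin N)) (t : ℝ) :
    HasDerivAt (fun r : ℝ => w (x + r • EuclideanSpace.single i 1) t) (dx w i x t) 0 := by
  have h1 := ((contDiff_slice h t).differentiable (by simp) x).hasFDerivAt
  exact h1.hasLineDerivAt (EuclideanSpace.single i 1)

lemma dx_eq_fderiv (h : ContDiff ℝ 1 (Function.uncurry w)) (i : Fin N)
    (x : EuclideanSpace ℝ (Fin N)) (t : ℝ) :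
    dx w i x t = fderiv ℝ (Function.uncurry w) (x, t) (EuclideanSpace.single i 1, 0) := by
  have h1 : HasFDerivAt (Function.uncurry w) _ (x, t) :=
    (h.differentiable (by simp) (x, t)).hasFDerivAt
  have h2 := h1.comp x ((hasFDerivAt_id (𝕜 := ℝ) x).prodMk (hasFDerivAt_const t x))
  have h3 : HasFDerivAt (fun y => w y t) _ x := h2
  simp [dx, h3.fderiv]

lemma dt_eq_fderiv (h : ContDiff ℝ 1 (Function.uncurry w))
    (x : EuclideanSpace ℝ (Fin N)) (t : ℝ) :
    dt w x t = fderiv ℝ (Function.uncurry w) (x, t) (0, 1) := by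
  have h1 : HasFDerivAt (Function.uncurry w) _ (x, t) :=
    (h.differentiable (by simp) (x, t)).hasFDerivAt
  have h2 := h1.comp t ((hasFDerivAt_const (𝕜 := ℝ) x t).prodMk (hasFDerivAt_id t))
  have h3 : HasFDerivAt (w x) _ t := h2
  simp [dt, ← fderiv_apply_one_eq_deriv, h3.fderiv]

lemma dt_dx_comm (h : ContDiff ℝ 2 (Function.uncurry w)) (i : Fin N)
    (x : EuclideanSpace ℝ (Fin N)) (t : ℝ) : dt (dx w i) x t = dx (dt w) i x t := by
  have h1 : ContDiff ℝ 1 (Function.uncurry w) := h.of_le (by norm_num)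
  rw [dt_eq_fderiv (contDiff_dx h (by norm_num) i), dx_eq_fderiv (contDiff_dt h (by norm_num))]
  have e1 : Function.uncurry (dx w i) = fun p => fderiv ℝ (Function.uncurry w) p
      (EuclideanSpace.single i 1, 0) := by
    ext p; exact dx_eq_fderiv h1 i p.1 p.2
  have e2 : Function.uncurry (dt w) = fun p => fderiv ℝ (Function.uncurry w) p (0, 1) := by
    ext p; exact dt_eq_fderiv h1 p.1 p.2
  have h3 : DifferentiableAt ℝ (fderiv ℝ (Function.uncurry w)) (x, t) :=
    (h.fderiv_right (m := 1) (by norm_num)).differentiable (by simp) _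
  rw [e1, e2, fderiv_clm_apply h3 (by fun_prop), fderiv_clm_apply h3 (by fun_prop)]
  simpa using (h.contDiffAt.isSymmSndFDerivAt (by simp)) _ _

end SpaceTimeCalculus

/-- An integral over `[0, 1]` depends on parameters as smoothly as its integrand. -/
lemma contDiff_integral_zero_one {H : Type} [NormedAddCommGroup H] [NormedSpace ℝ H]
    [LocallyCompactSpace H] (n : ℕ) {G : Type} [NormedAddCommGroup G] [NormedSpace ℝ G]
    {f : H → ℝ → G} (hf : ContDiff ℝ n (Function.uncurry f)) :
    ContDiff ℝ n (fun z => ∫ s in (0 : ℝ)..1, f z s) := by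
  induction n generalizing G with
  | zero =>
    rw [Nat.cast_zero, contDiff_zero] at *
    exact intervalIntegral.continuous_parametric_intervalIntegral_of_continuous' hf 0 1
  | succ n ih =>
    have hF : ContDiff ℝ n (Function.uncurry
        (fun (z : H) (s : ℝ) => fderiv ℝ (fun y => f y s) z)) := by
      have h1 : ContDiff ℝ (n + 1 : ℕ) (Function.uncurry
          (fun (p : H × ℝ) (y : H) => f y p.2)) :=
        hf.comp (contDiff_snd.prodMk (contDiff_snd.comp contDiff_fst))
      exact ContDiff.fderiv (𝕜 := ℝ) (E := H × ℝ) (F := H) (g := Prod.fst) (n := n) h1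
        contDiff_fst (by norm_cast)
    push_cast
    rw [contDiff_succ_iff_hasFDerivAt]
    refine ⟨fun z => ∫ s in (0 : ℝ)..1, fderiv ℝ (fun y => f y s) z, ih hF, fun z => ?_⟩
    have hc : Continuous (Function.uncurry (fun (z : H) (s : ℝ) => fderiv ℝ (fun y => f y s) z)) :=
      hF.continuous
    obtain ⟨K, hK, hKz⟩ := exists_compact_mem_nhds z
    obtain ⟨C, hC⟩ := (hK.prod (isCompact_Icc (a := (0 : ℝ)) (b := 1))).exists_bound_of_continuousOn
      hc.continuousOn
    have hfc : Continuous (Function.uncurry f) := hf.continuous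
    refine intervalIntegral.hasFDerivAt_integral_of_dominated_of_fderiv_le (𝕜 := ℝ)
      (F := f) (F' := fun z s => fderiv ℝ (fun y => f y s) z) (bound := fun _ => C) hKz
      (Eventually.of_forall fun y => ?_) ?_ ?_ ?_ ?_ ?_
    · exact (hfc.comp (Continuous.prodMk_right y)).aestronglyMeasurable
    · exact (hfc.comp (Continuous.prodMk_right z)).intervalIntegrable _ _
    · exact (hc.comp (Continuous.prodMk_right z)).aestronglyMeasurable
    · refine Eventually.of_forall fun t ht x hx => hC (x, t) ⟨hx, ?_⟩
      rw [Set.uIoc_of_le zero_le_one] at ht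
      exact ⟨ht.1.le, ht.2⟩
    · exact intervalIntegrable_const
    · refine Eventually.of_forall fun t ht x hx => ?_
      have : ContDiff ℝ (n + 1 : ℕ) (fun y => f y t) := hf.comp (contDiff_id.prodMk contDiff_const)
      exact (this.differentiable (by simp) x).hasFDerivAt

/-- The time primitive `∫₀ᵗ w(x,s) ds`. -/
def timePrimitive {N : ℕ} (w : EuclideanSpace ℝ (Fin N) → ℝ → ℝ)
    (x : EuclideanSpace ℝ (Fin N)) (t : ℝ) : ℝ :=
  ∫ s in (0 : ℝ)..t, w x s

lemma contDiff_timePrimitive {N n : ℕ} {w : EuclideanSpace ℝ (Fin N) → ℝ → ℝ}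
    (h : ContDiff ℝ n (Function.uncurry w)) :
    ContDiff ℝ n (Function.uncurry (timePrimitive w)) := by
  have h1 : Function.uncurry (timePrimitive w) =
      fun p => p.2 * ∫ s in (0 : ℝ)..1, w p.1 (p.2 * s) := by
    ext p
    simp [timePrimitive, Function.uncurry]
  rw [h1]
  refine contDiff_snd.mul (contDiff_integral_zero_one n ?_)
  exact h.comp ((contDiff_fst.comp contDiff_fst).prodMk
    ((contDiff_snd.comp contDiff_fst).mul contDiff_snd))

lemma dt_timePrimitive {N : ℕ} {w : EuclideanSpace ℝ (Fin N) → ℝ → ℝ}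
    (h : Continuous (Function.uncurry w)) : dt (timePrimitive w) = w := by
  ext x t
  have : Continuous (w x) := h.comp (Continuous.prodMk_right x)
  exact (this.integral_hasStrictDerivAt 0 t).hasDerivAt.deriv

section IntegrationByParts

variable {N : ℕ}

lemma integral_fderiv_eq_zero_of_hasCompactSupport {F : EuclideanSpace ℝ (Fin N) → ℝ}
    (hF : ContDiff ℝ 1 F) (hc : HasCompactSupport F) (v : EuclideanSpace ℝ (Fin N)) :
    ∫ x, fderiv ℝ F x v = 0 := by
  have hcont : Continuous (fun x => fderiv ℝ F x v) :=
    (hF.continuous_fderiv (by simp)).clm_apply continuous_const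
  have hsupp : HasCompactSupport (fun x => fderiv ℝ F x v) := hc.fderiv_apply ℝ v
  have h := integral_mul_fderiv_eq_neg_fderiv_mul_of_integrable (𝕜 := ℝ) (μ := volume)
    (f := fun _ : EuclideanSpace ℝ (Fin N) => (1 : ℝ)) (g := F) (v := v)
    (by simp) (by simpa using hcont.integrable_of_hasCompactSupport hsupp)
    (by simpa using hF.continuous.integrable_of_hasCompactSupport hc)
    (fun x _ => by fun_prop) (fun x _ => hF.differentiable (by simp) x)
  simpa using h

/-- The zeros of a real function at which its derivative does not vanish are countable. -/
lemma countable_zeros_of_deriv_ne_zero {h h' : ℝ → ℝ} (hd : ∀ t, HasDerivAt h (h' t) t) :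
    {t | h t = 0 ∧ h' t ≠ 0}.Countable := by
  refine (countable_setOfPred_isolated_right_within (s := {t | h t = 0 ∧ h' t ≠ 0})).mono ?_
  intro t ht
  refine ⟨ht, ?_⟩
  have h1 := (hd t).eventually_ne (c := 0) ht.2
  rw [eventually_nhdsWithin_iff] at h1
  rw [← Filter.empty_mem_iff_bot, mem_nhdsWithin_iff_exists_mem_nhds_inter]
  refine ⟨_, h1, ?_⟩
  rintro z ⟨hz, hz1, hz2⟩
  exact hz (ne_of_gt hz2) hz1.1

/-- Almost everywhere on its zero set, a `C¹` function has vanishing derivative. -/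
lemma ae_fderiv_apply_eq_zero_of_eq_zero {F : EuclideanSpace ℝ (Fin N) → ℝ}
    (hF : ContDiff ℝ 1 F) (v : EuclideanSpace ℝ (Fin N)) :
    ∀ᵐ x, F x = 0 → fderiv ℝ F x v = 0 := by
  have hcont : Continuous (fun x => fderiv ℝ F x v) :=
    (hF.continuous_fderiv (by simp)).clm_apply continuous_const
  have hm : MeasurableSet {x | F x = 0 → fderiv ℝ F x v = 0} := by
    have : {x | F x = 0 → fderiv ℝ F x v = 0} =
        {x | F x = 0}ᶜ ∪ {x | fderiv ℝ F x v = 0} := by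
      ext x; simp [imp_iff_not_or]
    rw [this]
    exact (isClosed_eq hF.continuous continuous_const).measurableSet.compl.union
      (isClosed_eq hcont continuous_const).measurableSet
  refine ae_mem_of_ae_add_linearMap_mem (LinearMap.toSpanSingleton ℝ _ v)
    (volume : Measure ℝ) volume hm fun y => ?_
  have hd : ∀ t, HasDerivAt (fun t : ℝ => F (y + t • v)) (fderiv ℝ F (y + t • v) v) t := by
    intro t
    have h1 := (hF.differentiable (by simp) (y + t • v)).hasFDerivAt
    have h2 : HasDerivAt (fun t : ℝ => y + t • v) v t := by
      simpa using ((hasDerivAt_id t).smul_const v).const_add y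
    exact h1.comp_hasDerivAt t h2
  have := (countable_zeros_of_deriv_ne_zero hd).ae_notMem volume
  filter_upwards [this] with t ht h0
  by_contra hne
  exact ht ⟨h0, hne⟩

/-- A smooth odd function that vanishes on `[-1, 1]` and is the identity far from `0`. -/
def softThreshold (y : ℝ) : ℝ := y * Real.smoothTransition (y ^ 2 - 1)

lemma contDiff_softThreshold : ContDiff ℝ 1 softThreshold :=
  contDiff_id.mul (Real.smoothTransition.contDiff.comp (by fun_prop))

lemma softThreshold_of_abs_lt {y : ℝ} (h : |y| < 1) : softThreshold y = 0 := by
  rw [softThreshold, Real.smoothTransition.zero_of_nonpos, mul_zero]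
  nlinarith [sq_abs y, abs_nonneg y]

lemma deriv_softThreshold_of_lt_abs {y : ℝ} (h : 2 < |y|) : deriv softThreshold y = 1 := by
  have : softThreshold =ᶠ[nhds y] id := by
    filter_upwards [continuous_abs.continuousAt.eventually_mem (lt_mem_nhds h)] with z hz
    have hz' : 2 < |z| := hz
    rw [softThreshold, Real.smoothTransition.one_of_one_le, mul_one, id]
    nlinarith [sq_abs z]
  rw [this.deriv_eq]; simp

lemma exists_bound_deriv_softThreshold : ∃ C, ∀ y, ‖deriv softThreshold y‖ ≤ C := by
  have hc : Continuous (deriv softThreshold) := contDiff_softThreshold.continuous_deriv (by simp)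
  obtain ⟨C, hC⟩ := (isCompact_Icc (a := (-2 : ℝ)) (b := 2)).exists_bound_of_continuousOn
    hc.continuousOn
  refine ⟨max C 1, fun y => ?_⟩
  by_cases hy : |y| ≤ 2
  · exact (hC y (abs_le.1 hy)).trans (le_max_left _ _)
  · rw [deriv_softThreshold_of_lt_abs (not_le.1 hy)]; simp

/-- The integral over an open set of a partial derivative of a compactly supported `C¹` function
vanishing on the boundary is zero. No regularity of the boundary is needed. -/
theorem setIntegral_fderiv_eq_zero {Ω : Set (EuclideanSpace ℝ (Fin N))} (hΩ : IsOpen Ω)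
    {F : EuclideanSpace ℝ (Fin N) → ℝ} (hF : ContDiff ℝ 1 F) (hc : HasCompactSupport F)
    (hb : ∀ x ∈ frontier Ω, F x = 0) (v : EuclideanSpace ℝ (Fin N)) :
    ∫ x in Ω, fderiv ℝ F x v = 0 := by
  have hcont : Continuous (fun x => fderiv ℝ F x v) :=
    (hF.continuous_fderiv (by simp)).clm_apply continuous_const
  have hsupp : HasCompactSupport (fun x => fderiv ℝ F x v) := hc.fderiv_apply ℝ v
  have hint := hcont.integrable_of_hasCompactSupport (μ := volume) hsupp
  obtain ⟨C, hC⟩ := exists_bound_deriv_softThreshold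
  have happrox : ∀ n : ℕ, ∫ x in Ω, deriv softThreshold (n * F x) * (fderiv ℝ F x v) = 0 := by
    intro n
    rcases Nat.eq_zero_or_pos n with rfl | hn
    · have : deriv softThreshold 0 = 0 := by
        have : softThreshold =ᶠ[nhds 0] fun _ => 0 := by
          filter_upwards [continuous_abs.continuousAt.eventually_mem
            (gt_mem_nhds (show |(0 : ℝ)| < 1 by simp))] with z hz
          exact softThreshold_of_abs_lt hz
        rw [this.deriv_eq]; simp
      simp [this]
    have hn' : (n : ℝ) ≠ 0 := by positivity
    have hG : ContDiff ℝ 1 (fun x => (n : ℝ)⁻¹ * softThreshold (n * F x)) :=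
      contDiff_const.mul (contDiff_softThreshold.comp (contDiff_const.mul hF))
    have hout : ∀ x ∉ Ω, Ω.indicator (fun x => (n : ℝ)⁻¹ * softThreshold (n * F x))
        =ᶠ[nhds x] fun _ => 0 := by
      intro x hx
      by_cases hxc : x ∈ closure Ω
      · have hx0 : F x = 0 := hb x ⟨hxc, by rwa [hΩ.interior_eq]⟩
        have hcF : Continuous (fun x => |n * F x|) :=
          (continuous_const.mul hF.continuous).abs
        filter_upwards [hcF.continuousAt.eventually_mem
          (gt_mem_nhds (show |n * F x| < 1 by simp [hx0]))] with z hz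
        simp [softThreshold_of_abs_lt hz]
      · filter_upwards [isClosed_closure.isOpen_compl.mem_nhds hxc] with z hz
        exact Set.indicator_of_notMem (fun h => hz (subset_closure h)) _
    have hin : ∀ x ∈ Ω, Ω.indicator (fun x => (n : ℝ)⁻¹ * softThreshold (n * F x))
        =ᶠ[nhds x] fun x => (n : ℝ)⁻¹ * softThreshold (n * F x) := by
      intro x hx
      filter_upwards [hΩ.mem_nhds hx] with z hz
      exact Set.indicator_of_mem hz _
    have hsm : ContDiff ℝ 1 (Ω.indicator (fun x => (n : ℝ)⁻¹ * softThreshold (n * F x))) := by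
      rw [contDiff_iff_contDiffAt]
      intro x
      by_cases hx : x ∈ Ω
      · exact hG.contDiffAt.congr_of_eventuallyEq (hin x hx)
      · exact contDiffAt_const.congr_of_eventuallyEq (hout x hx)
    have hcs : HasCompactSupport (Ω.indicator (fun x => (n : ℝ)⁻¹ * softThreshold (n * F x))) := by
      refine hc.mono fun x hx => ?_
      contrapose! hx
      have : F x = 0 := by simpa using hx
      simp [this, softThreshold]
    have key := integral_fderiv_eq_zero_of_hasCompactSupport hsm hcs v
    rw [← integral_indicator hΩ.measurableSet]
    rw [← key]
    congr 1
    ext x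
    by_cases hx : x ∈ Ω
    · rw [Set.indicator_of_mem hx, (hin x hx).fderiv_eq]
      have h1 := (hF.differentiable (by simp) x).hasFDerivAt
      have h2 := (contDiff_softThreshold.differentiable (by simp) (n * F x)).hasDerivAt
      have h3 := ((h2.comp_hasFDerivAt x (h1.const_mul (n : ℝ))).const_mul (n : ℝ)⁻¹)
      have h4 : HasFDerivAt (fun x => (n : ℝ)⁻¹ * softThreshold (n * F x)) _ x := h3
      rw [h4.fderiv]
      simp
      field_simp
    · rw [Set.indicator_of_notMem hx, (hout x hx).fderiv_eq]
      simp
  have hlim : Tendsto (fun n : ℕ => ∫ x in Ω, deriv softThreshold (n * F x) * (fderiv ℝ F x v))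
      atTop (nhds (∫ x in Ω, fderiv ℝ F x v)) := by
    refine tendsto_integral_of_dominated_convergence (fun x => C * ‖fderiv ℝ F x v‖) ?_ ?_ ?_ ?_
    · intro n
      have hc1 : Continuous (deriv softThreshold) :=
        contDiff_softThreshold.continuous_deriv (by simp)
      exact ((hc1.comp (continuous_const.mul hF.continuous)).mul hcont).aestronglyMeasurable
    · exact (hint.norm.const_mul C).integrableOn
    · intro n
      refine Eventually.of_forall fun x => ?_
      rw [norm_mul]
      exact mul_le_mul_of_nonneg_right (hC _) (norm_nonneg _)
    · filter_upwards [ae_restrict_of_ae (ae_fderiv_apply_eq_zero_of_eq_zero hF v)] with x hx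
      by_cases h0 : F x = 0
      · simp [hx h0]
      · refine tendsto_const_nhds.congr' ?_
        filter_upwards [eventually_gt_atTop ⌈2 / |F x|⌉₊] with n hn
        have : 2 / |F x| < n := (Nat.le_ceil _).trans_lt (by exact_mod_cast hn)
        rw [deriv_softThreshold_of_lt_abs, one_mul]
        rw [abs_mul, Nat.abs_cast]
        rwa [div_lt_iff₀ (abs_pos.2 h0)] at this
  simp only [happrox] at hlim
  exact (tendsto_nhds_unique tendsto_const_nhds hlim).symm

end IntegrationByParts

/-- An energy whose density `e` satisfies `∂ₜe ≤ div F` on `Ω`, with a flux `F` vanishing on the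
boundary and both `e` and `F` propagating at finite speed, does not exceed its initial value. -/
theorem setIntegral_le_of_deriv_le_div {N : ℕ} {Ω : Set (EuclideanSpace ℝ (Fin N))}
    (hΩ : IsOpen Ω) {R₀ : ℝ} {e e' : EuclideanSpace ℝ (Fin N) → ℝ → ℝ}
    {F : Fin N → EuclideanSpace ℝ (Fin N) → ℝ → ℝ}
    (he : ContinuousOn (Function.uncurry e) (closure Ω ×ˢ Set.Ici 0))
    (he' : ContinuousOn (Function.uncurry e') (closure Ω ×ˢ Set.Ici 0))
    (hd : ∀ x ∈ Ω, ∀ t > (0 : ℝ), HasDerivAt (e x) (e' x t) t)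
    (hes : ∀ x ∈ Ω, ∀ t ≥ (0 : ℝ), R₀ + t < ‖x‖ → e x t = 0)
    (hF : ∀ i, ∀ t > (0 : ℝ), ContDiff ℝ 1 (fun x => F i x t))
    (hFs : ∀ i, ∀ t > (0 : ℝ), ∀ x, R₀ + t < ‖x‖ → F i x t = 0)
    (hFb : ∀ i, ∀ t > (0 : ℝ), ∀ x ∈ frontier Ω, F i x t = 0)
    (hle : ∀ x ∈ Ω, ∀ t > (0 : ℝ), e' x t ≤ ∑ i, dx (F i) i x t)
    (τ : ℝ) (hτ : 0 ≤ τ) : ∫ x in Ω, e x τ ≤ ∫ x in Ω, e x 0 := by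
  set R := R₀ + τ + 1 with hR
  set ΩR := Ω ∩ Metric.closedBall 0 R with hΩR
  have hmeas : MeasurableSet ΩR := hΩ.measurableSet.inter Metric.isClosed_closedBall.measurableSet
  have hK : IsCompact ((closure Ω ∩ Metric.closedBall 0 R) ×ˢ Set.Icc (0 : ℝ) (τ + 1)) :=
    ((isCompact_closedBall _ _).inter_left isClosed_closure).prod isCompact_Icc
  have hKsub : (closure Ω ∩ Metric.closedBall 0 R) ×ˢ Set.Icc (0 : ℝ) (τ + 1) ⊆
      closure Ω ×ˢ Set.Ici 0 :=
    Set.prod_mono Set.inter_subset_left fun t ht => ht.1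
  obtain ⟨C, hC⟩ := hK.exists_bound_of_continuousOn (he.mono hKsub)
  obtain ⟨C', hC'⟩ := hK.exists_bound_of_continuousOn (he'.mono hKsub)
  have hmem : ∀ x ∈ ΩR, ∀ t ∈ Set.Icc (0 : ℝ) (τ + 1),
      (x, t) ∈ (closure Ω ∩ Metric.closedBall 0 R) ×ˢ Set.Icc (0 : ℝ) (τ + 1) :=
    fun x hx t ht => ⟨⟨subset_closure hx.1, hx.2⟩, ht⟩
  have hslice : ∀ {g : EuclideanSpace ℝ (Fin N) → ℝ → ℝ},
      ContinuousOn (Function.uncurry g) (closure Ω ×ˢ Set.Ici 0) → ∀ t ≥ (0 : ℝ),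
      AEStronglyMeasurable (fun x => g x t) (volume.restrict ΩR) := by
    intro g hg t ht
    refine ContinuousOn.aestronglyMeasurable ?_ hmeas
    exact hg.comp (Continuous.prodMk_left t).continuousOn
      fun x hx => ⟨subset_closure hx.1, ht⟩
  have hfin : volume ΩR < ⊤ :=
    (measure_mono Set.inter_subset_right).trans_lt (isCompact_closedBall _ _).measure_lt_top
  have hconst : ∀ c : ℝ, Integrable (fun _ : EuclideanSpace ℝ (Fin N) => c)
      (volume.restrict ΩR) := fun c => integrableOn_const hfin.ne
  have hres : ∀ t ∈ Set.Icc (0 : ℝ) τ, ∫ x in Ω, e x t = ∫ x in ΩR, e x t := by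
    intro t ht
    refine setIntegral_eq_of_subset_of_forall_sdiff_eq_zero hΩ.measurableSet
      Set.inter_subset_left fun x hx => hes x hx.1 t ht.1 ?_
    have h1 : R < ‖x‖ := by
      by_contra h
      exact hx.2 ⟨hx.1, by simpa using h⟩
    linarith [ht.2]
  rw [hres τ ⟨hτ, le_rfl⟩, hres 0 ⟨le_rfl, hτ⟩]
  have hcont : ContinuousOn (fun t => ∫ x in ΩR, e x t) (Set.Icc 0 τ) := by
    refine continuousOn_of_dominated (bound := fun _ => C)
      (fun t ht => hslice he t ht.1) (fun t ht => ?_) (hconst C) ?_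
    · refine (ae_restrict_iff' hmeas).2 (Eventually.of_forall fun x hx => ?_)
      exact hC (x, t) (hmem x hx t ⟨ht.1, by linarith [ht.2]⟩)
    · refine (ae_restrict_iff' hmeas).2 (Eventually.of_forall fun x hx => ?_)
      exact he.comp (Continuous.prodMk_right x).continuousOn
        fun t ht => ⟨subset_closure hx.1, ht.1⟩
  have hder : ∀ t ∈ Set.Ioo (0 : ℝ) τ, Integrable (fun x => e' x t) (volume.restrict ΩR) ∧
      HasDerivAt (fun t => ∫ x in ΩR, e x t) (∫ x in ΩR, e' x t) t := by
    intro t ht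
    refine hasDerivAt_integral_of_dominated_loc_of_deriv_le (F := fun t x => e x t)
      (F' := fun t x => e' x t) (bound := fun _ => C')
      (Ioo_mem_nhds ht.1 ht.2) ?_ ?_ (hslice he' t ht.1.le) ?_ (hconst C') ?_
    · filter_upwards [Ioo_mem_nhds ht.1 ht.2] with s hs
      exact hslice he s hs.1.le
    · refine (hconst C).mono' (hslice he t ht.1.le) ?_
      refine (ae_restrict_iff' hmeas).2 (Eventually.of_forall fun x hx => ?_)
      exact hC (x, t) (hmem x hx t ⟨ht.1.le, by linarith [ht.2]⟩)
    · refine (ae_restrict_iff' hmeas).2 (Eventually.of_forall fun x hx s hs => ?_)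
      exact hC' (x, s) (hmem x hx s ⟨hs.1.le, by linarith [hs.2]⟩)
    · refine (ae_restrict_iff' hmeas).2 (Eventually.of_forall fun x hx s hs => ?_)
      exact hd x hx.1 s hs.1
  have hneg : ∀ t ∈ Set.Ioo (0 : ℝ) τ, ∫ x in ΩR, e' x t ≤ 0 := by
    intro t ht
    have hcs : ∀ i, HasCompactSupport (fun x => F i x t) := by
      intro i
      refine HasCompactSupport.intro (isCompact_closedBall 0 (R₀ + t)) fun x hx => ?_
      exact hFs i t ht.1 x (by simpa using hx)
    have hint : ∀ i, Integrable (fun x => dx (F i) i x t) := by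
      intro i
      refine Continuous.integrable_of_hasCompactSupport ?_ ((hcs i).fderiv_apply ℝ _)
      exact ((hF i t ht.1).continuous_fderiv (by simp)).clm_apply continuous_const
    have hzero : ∀ x ∈ Ω \ ΩR, ∑ i, dx (F i) i x t = 0 := by
      intro x hx
      have h1 : R < ‖x‖ := by
        by_contra h
        exact hx.2 ⟨hx.1, by simpa using h⟩
      refine Finset.sum_eq_zero fun i _ => ?_
      have : (fun y => F i y t) =ᶠ[nhds x] fun _ => 0 := by
        filter_upwards [continuous_norm.continuousAt.eventually_mem (lt_mem_nhds h1)] with y hy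
        have hy' : R < ‖y‖ := hy
        exact hFs i t ht.1 y (by linarith [ht.2])
      simp [dx, this.fderiv_eq]
    calc ∫ x in ΩR, e' x t ≤ ∫ x in ΩR, ∑ i, dx (F i) i x t := by
          refine setIntegral_mono_on (hder t ht).1
            (integrable_finsetSum _ fun i _ => (hint i).integrableOn) hmeas fun x hx => ?_
          exact hle x hx.1 t ht.1
      _ = ∫ x in Ω, ∑ i, dx (F i) i x t :=
          (setIntegral_eq_of_subset_of_forall_sdiff_eq_zero hΩ.measurableSet
            Set.inter_subset_left hzero).symm
      _ = ∑ i, ∫ x in Ω, dx (F i) i x t :=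
          integral_finsetSum _ fun i _ => (hint i).integrableOn
      _ = 0 := Finset.sum_eq_zero fun i _ =>
          setIntegral_fderiv_eq_zero hΩ (hF i t ht.1) (hcs i) (hFb i t ht.1) _
      _ ≤ 0 := le_rfl
  refine antitoneOn_of_deriv_nonpos (convex_Icc 0 τ) hcont ?_ ?_ ⟨le_rfl, hτ⟩ ⟨hτ, le_rfl⟩ hτ
  · rw [interior_Icc]
    exact fun t ht => (hder t ht).2.differentiableAt.differentiableWithinAt
  · rw [interior_Icc]
    exact fun t ht => (hder t ht).2.deriv ▸ hneg t ht

section WeightedEnergy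

variable {N : ℕ} {Ω : Set (EuclideanSpace ℝ (Fin N))} {a : EuclideanSpace ℝ (Fin N) → ℝ}
  {R₀ : ℝ} {u : EuclideanSpace ℝ (Fin N) → ℝ → ℝ}

namespace IsDampedWaveSolution

lemma contDiff (hu : IsDampedWaveSolution 3 Ω a R₀ u) : ContDiff ℝ 3 (Function.uncurry u) := hu.1

lemma dt_dt_eq (hu : IsDampedWaveSolution 3 Ω a R₀ u) {x : EuclideanSpace ℝ (Fin N)} (hx : x ∈ Ω)
    {t : ℝ} (ht : 0 < t) :
    dt (dt u) x t = ∑ i, dx (dx u i) i x t - a x * dt u x t := by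
  have h := hu.2.1 x hx t ht
  have h2 : dt (dt u) x t - ∑ i, dx (dx u i) i x t + a x * dt u x t = 0 := h
  linarith

lemma eq_zero_of_lt_norm (hu : IsDampedWaveSolution 3 Ω a R₀ u) {x : EuclideanSpace ℝ (Fin N)}
    {t : ℝ} (ht : 0 ≤ t) (hx : R₀ + t < ‖x‖) : u x t = 0 := by
  by_contra h
  have h1 : x ∈ tsupport (fun x => u x t) := subset_tsupport _ h
  have h2 := hu.2.2.2.2.2 t ht h1
  rw [mem_closedBall_zero_iff] at h2
  linarith

lemma dx_eq_zero_of_lt_norm (hu : IsDampedWaveSolution 3 Ω a R₀ u) (i : Fin N)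
    {x : EuclideanSpace ℝ (Fin N)} {t : ℝ} (ht : 0 ≤ t) (hx : R₀ + t < ‖x‖) : dx u i x t = 0 := by
  have : (fun y => u y t) =ᶠ[nhds x] fun _ => 0 := by
    filter_upwards [continuous_norm.continuousAt.eventually_mem (lt_mem_nhds hx)] with y hy
    exact hu.eq_zero_of_lt_norm ht hy
  simp [dx, this.fderiv_eq]

lemma dt_eq_zero_of_lt_norm (hu : IsDampedWaveSolution 3 Ω a R₀ u)
    {x : EuclideanSpace ℝ (Fin N)} {t : ℝ} (ht : 0 ≤ t) (hx : R₀ + t < ‖x‖) : dt u x t = 0 := by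
  have h1 := (hasDerivAt_dt (hu.contDiff.of_le (by norm_num)) x t).hasDerivWithinAt
    (s := Set.Ici t)
  have h2 : HasDerivWithinAt (u x) 0 (Set.Ici t) t := by
    refine (hasDerivWithinAt_const t (Set.Ici t) (0 : ℝ)).congr_of_eventuallyEq ?_
      (hu.eq_zero_of_lt_norm ht hx)
    have hs : Set.Iio (‖x‖ - R₀) ∈ nhds t := Iio_mem_nhds (by linarith)
    filter_upwards [self_mem_nhdsWithin, mem_nhdsWithin_of_mem_nhds hs] with s hs1 hs2
    exact hu.eq_zero_of_lt_norm (ht.trans hs1) (by linarith [Set.mem_Iio.1 hs2])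
  exact (uniqueDiffWithinAt_Ici t).eq_deriv _ h1 h2

lemma eq_zero_of_mem_frontier (hu : IsDampedWaveSolution 3 Ω a R₀ u)
    {x : EuclideanSpace ℝ (Fin N)} (hx : x ∈ frontier Ω) {t : ℝ} (ht : 0 < t) : u x t = 0 :=
  hu.2.2.1 x hx t ht

lemma dt_eq_zero_of_mem_frontier (hu : IsDampedWaveSolution 3 Ω a R₀ u)
    {x : EuclideanSpace ℝ (Fin N)} (hx : x ∈ frontier Ω) {t : ℝ} (ht : 0 < t) : dt u x t = 0 := by
  have : u x =ᶠ[nhds t] fun _ => 0 := by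
    filter_upwards [Ioi_mem_nhds ht] with s hs
    exact hu.eq_zero_of_mem_frontier hx hs
  simp [dt, this.deriv_eq]

end IsDampedWaveSolution

/-- The weight `(t₀ + t)^λ exp(B(x) / (t₀ + t))`. -/
def expWeight (B : EuclideanSpace ℝ (Fin N) → ℝ) (lam t₀ : ℝ)
    (x : EuclideanSpace ℝ (Fin N)) (t : ℝ) : ℝ :=
  (t₀ + t) ^ lam * Real.exp (B x / (t₀ + t))

/-- The density `(K (uₜ² + |∇u|²) + 2 u uₜ + a u²) Ψ` of the weighted energy. -/
def energyDensity (a : EuclideanSpace ℝ (Fin N) → ℝ) (u : EuclideanSpace ℝ (Fin N) → ℝ → ℝ)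
    (B : EuclideanSpace ℝ (Fin N) → ℝ) (K lam t₀ : ℝ)
    (x : EuclideanSpace ℝ (Fin N)) (t : ℝ) : ℝ :=
  (K * ((dt u x t) ^ 2 + ∑ i, (dx u i x t) ^ 2) + 2 * (u x t * dt u x t) + a x * (u x t) ^ 2)
    * expWeight B lam t₀ x t

/-- The time derivative of `energyDensity`. -/
def energyDensityDeriv (a : EuclideanSpace ℝ (Fin N) → ℝ)
    (u : EuclideanSpace ℝ (Fin N) → ℝ → ℝ)
    (B : EuclideanSpace ℝ (Fin N) → ℝ) (K lam t₀ : ℝ)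
    (x : EuclideanSpace ℝ (Fin N)) (t : ℝ) : ℝ :=
  (K * (2 * dt u x t * dt (dt u) x t + ∑ i, 2 * dx u i x t * dt (dx u i) x t)
      + 2 * (dt u x t * dt u x t + u x t * dt (dt u) x t)
      + a x * (2 * u x t * dt u x t)) * expWeight B lam t₀ x t
  + (K * ((dt u x t) ^ 2 + ∑ i, (dx u i x t) ^ 2) + 2 * (u x t * dt u x t) + a x * (u x t) ^ 2)
    * (expWeight B lam t₀ x t * (lam / (t₀ + t) - B x / (t₀ + t) ^ 2))

/-- The `i`-th component `(2 K uₜ + 2 u) ∂ᵢu Ψ + u² ∂ᵢΨ` of the flux of the weighted energy. -/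
def energyFlux (u : EuclideanSpace ℝ (Fin N) → ℝ → ℝ)
    (B : EuclideanSpace ℝ (Fin N) → ℝ) (K lam t₀ : ℝ) (i : Fin N)
    (x : EuclideanSpace ℝ (Fin N)) (t : ℝ) : ℝ :=
  ((2 * K * dt u x t + 2 * u x t) * dx u i x t
    + (u x t) ^ 2 * (fderiv ℝ B x (EuclideanSpace.single i 1) / (t₀ + t)))
    * expWeight B lam t₀ x t

variable {B : EuclideanSpace ℝ (Fin N) → ℝ} {K lam t₀ : ℝ}

lemma hasDerivAt_expWeight (ht₀ : 0 < t₀) (x : EuclideanSpace ℝ (Fin N)) {t : ℝ} (ht : 0 ≤ t) :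
    HasDerivAt (expWeight B lam t₀ x)
      (expWeight B lam t₀ x t * (lam / (t₀ + t) - B x / (t₀ + t) ^ 2)) t := by
  have hT : 0 < t₀ + t := by linarith
  have h1 : HasDerivAt (fun t => t₀ + t) 1 t := (hasDerivAt_id t).const_add t₀
  have h2 := h1.rpow_const (p := lam) (Or.inl hT.ne')
  have h3 := ((hasDerivAt_const t (B x)).div h1 hT.ne').exp
  refine (h2.mul h3).congr_deriv ?_
  simp only [expWeight, Pi.div_apply, Real.rpow_sub_one hT.ne']
  field_simp
  ring

lemma continuousOn_expWeight (hB : Continuous B) (ht₀ : 0 < t₀)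
    (s : Set (EuclideanSpace ℝ (Fin N))) :
    ContinuousOn (Function.uncurry (expWeight B lam t₀)) (s ×ˢ Set.Ici 0) := by
  have hT : ∀ p ∈ s ×ˢ Set.Ici (0 : ℝ), t₀ + p.2 ≠ 0 := fun p hp => by
    have : (0 : ℝ) ≤ p.2 := hp.2
    linarith
  have h1 : ContinuousOn (fun p : EuclideanSpace ℝ (Fin N) × ℝ => t₀ + p.2)
    (s ×ˢ Set.Ici 0) := by fun_prop
  refine (h1.rpow_const fun p hp => Or.inl (hT p hp)).mul ?_
  exact ((hB.comp continuous_fst).continuousOn.div h1 hT).rexp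

lemma hasDerivAt_energyDensity (hu : ContDiff ℝ 3 (Function.uncurry u)) (ht₀ : 0 < t₀)
    (x : EuclideanSpace ℝ (Fin N)) {t : ℝ} (ht : 0 ≤ t) :
    HasDerivAt (energyDensity a u B K lam t₀ x) (energyDensityDeriv a u B K lam t₀ x t) t := by
  have h0 := hasDerivAt_dt (hu.of_le (by norm_num)) x t
  have h1 := hasDerivAt_dt (contDiff_dt (m := 1) hu (by norm_num)) x t
  have h2 := fun i => hasDerivAt_dt (contDiff_dx (m := 1) hu (by norm_num) i) x t
  have h3 : HasDerivAt (fun t => ∑ i, (dx u i x t) ^ 2)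
      (∑ i, 2 * dx u i x t * dt (dx u i) x t) t := by
    refine HasDerivAt.fun_sum fun i _ => ((h2 i).pow 2).congr_deriv ?_
    simp
  refine ((((((h1.pow 2).add h3).const_mul K).add ((h0.mul h1).const_mul 2)).add
    ((h0.pow 2).const_mul (a x))).mul (hasDerivAt_expWeight ht₀ x ht)).congr_deriv ?_
  simp [energyDensityDeriv]

lemma continuousOn_energyDensity (hu : ContDiff ℝ 3 (Function.uncurry u)) (hB : Continuous B)
    {s : Set (EuclideanSpace ℝ (Fin N))} (ha : ContinuousOn a s) (ht₀ : 0 < t₀) :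
    ContinuousOn (Function.uncurry (energyDensity a u B K lam t₀)) (s ×ˢ Set.Ici 0) := by
  have h0 := hu.continuous
  have h1 := (contDiff_dt (m := 2) hu (by norm_num)).continuous
  have h2 := fun i => (contDiff_dx (m := 2) hu (by norm_num) i).continuous
  have hw := continuousOn_expWeight (lam := lam) hB ht₀ s
  have ha' : ContinuousOn (fun p : EuclideanSpace ℝ (Fin N) × ℝ => a p.1) (s ×ˢ Set.Ici 0) :=
    ha.comp continuous_fst.continuousOn fun p hp => hp.1
  refine ContinuousOn.mul (ContinuousOn.add ?_ (ha'.mul (h0.pow 2).continuousOn)) hw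
  exact (((h1.pow 2).add (continuous_finsetSum _ fun i _ => (h2 i).pow 2)).const_mul K |>.add
    ((h0.mul h1).const_mul 2)).continuousOn

lemma continuousOn_energyDensityDeriv (hu : ContDiff ℝ 3 (Function.uncurry u))
    (hB : Continuous B) {s : Set (EuclideanSpace ℝ (Fin N))} (ha : ContinuousOn a s)
    (ht₀ : 0 < t₀) :
    ContinuousOn (Function.uncurry (energyDensityDeriv a u B K lam t₀)) (s ×ˢ Set.Ici 0) := by
  have h0 := hu.continuous
  have hc1 := contDiff_dt (m := 2) hu (by norm_num)
  have hc2 := fun i => contDiff_dx (m := 2) hu (by norm_num) i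
  have h1 := hc1.continuous
  have h2 := fun i => (hc2 i).continuous
  have h3 := (contDiff_dt (m := 1) hc1 (by norm_num)).continuous
  have h4 := fun i => (contDiff_dt (m := 1) (hc2 i) (by norm_num)).continuous
  have hw := continuousOn_expWeight (lam := lam) hB ht₀ s
  have ha' : ContinuousOn (fun p : EuclideanSpace ℝ (Fin N) × ℝ => a p.1) (s ×ˢ Set.Ici 0) :=
    ha.comp continuous_fst.continuousOn fun p hp => hp.1
  have hT : ∀ p ∈ s ×ˢ Set.Ici (0 : ℝ), t₀ + p.2 ≠ 0 := fun p hp => by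
    have : (0 : ℝ) ≤ p.2 := hp.2
    linarith
  have hT' : ContinuousOn (fun p : EuclideanSpace ℝ (Fin N) × ℝ => t₀ + p.2)
    (s ×ˢ Set.Ici 0) := by fun_prop
  have hB' : ContinuousOn (fun p : EuclideanSpace ℝ (Fin N) × ℝ => B p.1)
    (s ×ˢ Set.Ici 0) := (hB.comp continuous_fst).continuousOn
  refine ContinuousOn.add (ContinuousOn.mul (ContinuousOn.add ?_ (ha'.mul ?_)) hw)
    (ContinuousOn.mul (ContinuousOn.add ?_ (ha'.mul (h0.pow 2).continuousOn))
      (hw.mul ((continuousOn_const.div hT' hT).sub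
        (hB'.div (hT'.pow 2) fun p hp => pow_ne_zero 2 (hT p hp)))))
  · exact ((((h1.const_mul 2).mul h3).add (continuous_finsetSum _ fun i _ =>
      ((h2 i).const_mul 2).mul (h4 i))).const_mul K |>.add
      (((h1.mul h1).add (h0.mul h3)).const_mul 2)).continuousOn
  · exact ((h0.const_mul 2).mul h1).continuousOn
  · exact (((h1.pow 2).add (continuous_finsetSum _ fun i _ => (h2 i).pow 2)).const_mul K |>.add
      ((h0.mul h1).const_mul 2)).continuousOn

lemma contDiff_expWeight (hB : ContDiff ℝ 2 B) (t : ℝ) :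
    ContDiff ℝ 2 (fun x => expWeight B lam t₀ x t) :=
  contDiff_const.mul (hB.div_const _).exp

lemma contDiff_energyFlux (hu : ContDiff ℝ 3 (Function.uncurry u)) (hB : ContDiff ℝ 2 B)
    (i : Fin N) (t : ℝ) : ContDiff ℝ 1 (fun x => energyFlux u B K lam t₀ i x t) := by
  have h0 : ContDiff ℝ 1 (fun x => u x t) := contDiff_slice (hu.of_le (by norm_num)) t
  have h1 : ContDiff ℝ 1 (fun x => dt u x t) :=
    contDiff_slice (contDiff_dt (m := 1) hu (by norm_num)) t
  have h2 : ContDiff ℝ 1 (fun x => dx u i x t) :=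
    contDiff_slice (contDiff_dx (m := 1) hu (by norm_num) i) t
  have h3 : ContDiff ℝ 1 (fun x => fderiv ℝ B x (EuclideanSpace.single i 1)) :=
    (hB.fderiv_right (m := 1) (by norm_num)).clm_apply contDiff_const
  have h4 : ContDiff ℝ 1 (fun x => expWeight B lam t₀ x t) :=
    (contDiff_expWeight hB t).of_le (by norm_num)
  exact ((((contDiff_const.mul h1).add (contDiff_const.mul h0)).mul h2).add
    ((h0.pow 2).mul (h3.div_const _))).mul h4

/-- A line derivative of a differentiable function computes its Fréchet derivative. -/
lemma fderiv_single_eq_of_hasDerivAt {f : EuclideanSpace ℝ (Fin N) → ℝ}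
    {x v : EuclideanSpace ℝ (Fin N)} {c : ℝ} (hf : DifferentiableAt ℝ f x)
    (h : HasDerivAt (fun r : ℝ => f (x + r • v)) c 0) : fderiv ℝ f x v = c :=
  HasDerivAt.unique (hf.hasFDerivAt.hasLineDerivAt v) h

lemma hasDerivAt_comp_add_smul {f : EuclideanSpace ℝ (Fin N) → ℝ}
    {x : EuclideanSpace ℝ (Fin N)} (hf : DifferentiableAt ℝ f x)
    (v : EuclideanSpace ℝ (Fin N)) :
    HasDerivAt (fun r : ℝ => f (x + r • v)) (fderiv ℝ f x v) 0 :=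
  hf.hasFDerivAt.hasLineDerivAt v

lemma dx_energyFlux (hu : ContDiff ℝ 3 (Function.uncurry u)) (hB : ContDiff ℝ 2 B)
    (i : Fin N) (x : EuclideanSpace ℝ (Fin N)) (t : ℝ) :
    dx (energyFlux u B K lam t₀ i) i x t =
      ((2 * K * dx (dt u) i x t + 2 * dx u i x t) * dx u i x t
        + (2 * K * dt u x t + 2 * u x t) * dx (dx u i) i x t
        + (2 * K * dt u x t + 4 * u x t) * (dx u i x t *
            fderiv ℝ B x (EuclideanSpace.single i 1)) / (t₀ + t)
        + (u x t) ^ 2 * fderiv ℝ (fun z => fderiv ℝ B z (EuclideanSpace.single i 1)) x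
            (EuclideanSpace.single i 1) / (t₀ + t)
        + (u x t) ^ 2 * (fderiv ℝ B x (EuclideanSpace.single i 1)) ^ 2 / (t₀ + t) ^ 2)
        * expWeight B lam t₀ x t := by
  have h0 := hasDerivAt_dx (hu.of_le (by norm_num)) i x t
  have h1 := hasDerivAt_dx (contDiff_dt (m := 1) hu (by norm_num)) i x t
  have h2 := hasDerivAt_dx (contDiff_dx (m := 1) hu (by norm_num) i) i x t
  have hBf : ContDiff ℝ 1 (fun x => fderiv ℝ B x (EuclideanSpace.single i 1)) :=
    (hB.fderiv_right (m := 1) (by norm_num)).clm_apply contDiff_const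
  have h3 := hasDerivAt_comp_add_smul (hBf.differentiable (by simp) x)
    (EuclideanSpace.single i 1)
  have h4 := hasDerivAt_comp_add_smul (hB.differentiable (by simp) x)
    (EuclideanSpace.single i 1)
  have h5 := ((h4.div_const (t₀ + t)).exp).const_mul ((t₀ + t) ^ lam)
  refine fderiv_single_eq_of_hasDerivAt
    ((contDiff_energyFlux hu hB i t).differentiable (by simp) x) ?_
  refine ((((((h1.const_mul (2 * K)).add (h0.const_mul 2)).mul h2)).add
    ((h0.pow 2).mul (h3.div_const (t₀ + t)))).mul h5).congr_deriv ?_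
  simp [expWeight]
  generalize t₀ + t = T
  ring

end WeightedEnergy

section WeightedEnergyInequality

/-- The quadratic form that controls the production of the weighted energy: `S`, `P`, `b`, `l`, `β`
stand for `|∇u|²`, `∇u · ∇B`, `|∇B|²`, `ΔB` and `B`. -/
def energyProduction (a K lam T u X S P b l β : ℝ) : ℝ :=
  -2 * K * a * X ^ 2 + 2 * X ^ 2 - 2 * K * X * P / T - 2 * S - 4 * u * P / T
    - u ^ 2 * (l / T + b / T ^ 2)
    + (K * (X ^ 2 + S) + 2 * (u * X) + a * u ^ 2) * (lam / T - β / T ^ 2)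

variable {N : ℕ} {Ω : Set (EuclideanSpace ℝ (Fin N))} {a : EuclideanSpace ℝ (Fin N) → ℝ}
  {R₀ : ℝ} {u : EuclideanSpace ℝ (Fin N) → ℝ → ℝ} {B : EuclideanSpace ℝ (Fin N) → ℝ}
  {K lam t₀ : ℝ}

lemma energyDensityDeriv_sub_sum_dx_energyFlux (hu : IsDampedWaveSolution 3 Ω a R₀ u)
    (hB : ContDiff ℝ 2 B) (ht₀ : 0 < t₀) {x : EuclideanSpace ℝ (Fin N)} (hx : x ∈ Ω) {t : ℝ}
    (ht : 0 < t) :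
    energyDensityDeriv a u B K lam t₀ x t - ∑ i, dx (energyFlux u B K lam t₀ i) i x t =
      energyProduction (a x) K lam (t₀ + t) (u x t) (dt u x t) (∑ i, (dx u i x t) ^ 2)
        (∑ i, dx u i x t * fderiv ℝ B x (EuclideanSpace.single i 1))
        (∑ i, (fderiv ℝ B x (EuclideanSpace.single i 1)) ^ 2) (lap B x) (B x)
        * expWeight B lam t₀ x t := by
  have hT : t₀ + t ≠ 0 := by linarith
  simp only [dx_energyFlux hu.contDiff hB, energyDensityDeriv, hu.dt_dt_eq hx ht,
    dt_dx_comm (hu.contDiff.of_le (by norm_num)), energyProduction, lap]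
  rw [← Finset.sum_mul]
  have hsum : ∑ i, ((2 * K * dx (dt u) i x t + 2 * dx u i x t) * dx u i x t
        + (2 * K * dt u x t + 2 * u x t) * dx (dx u i) i x t
        + (2 * K * dt u x t + 4 * u x t) * (dx u i x t *
            fderiv ℝ B x (EuclideanSpace.single i 1)) / (t₀ + t)
        + (u x t) ^ 2 * fderiv ℝ (fun z => fderiv ℝ B z (EuclideanSpace.single i 1)) x
            (EuclideanSpace.single i 1) / (t₀ + t)
        + (u x t) ^ 2 * (fderiv ℝ B x (EuclideanSpace.single i 1)) ^ 2 / (t₀ + t) ^ 2)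
      = K * ∑ i, 2 * dx u i x t * dx (dt u) i x t + 2 * ∑ i, (dx u i x t) ^ 2
        + (2 * K * dt u x t + 2 * u x t) * ∑ i, dx (dx u i) i x t
        + (2 * K * dt u x t + 4 * u x t) * (∑ i, dx u i x t *
            fderiv ℝ B x (EuclideanSpace.single i 1)) / (t₀ + t)
        + (u x t) ^ 2 * (∑ i, fderiv ℝ (fun z => fderiv ℝ B z (EuclideanSpace.single i 1)) x
            (EuclideanSpace.single i 1)) / (t₀ + t)
        + (u x t) ^ 2 * (∑ i, (fderiv ℝ B x (EuclideanSpace.single i 1)) ^ 2) / (t₀ + t) ^ 2 := by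
    simp only [Finset.mul_sum, Finset.sum_div, ← Finset.sum_add_distrib]
    refine Finset.sum_congr rfl fun i _ => ?_
    ring
  rw [hsum]
  generalize t₀ + t = T
  ring

lemma le_add_of_sq_le {x y z : ℝ} (hx : 0 ≤ x) (hy : 0 ≤ y) (h : z ^ 2 ≤ 4 * (x * y)) :
    z ≤ x + y :=
  (abs_le_of_sq_le_sq' (by nlinarith [sq_nonneg (x - y)]) (by positivity)).2

/-- The production of the weighted energy is nonpositive as soon as the weight satisfies the
supersolution inequalities and the parameter `K` is large. -/
lemma energyProduction_nonpos {a K lam T u X S P b l β κ C : ℝ} (ha : 0 < a) (hT : 0 < T)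
    (hK : 0 ≤ K) (hκ : 0 < κ) (hκ1 : κ < 1) (hS : 0 ≤ S) (hP : P ^ 2 ≤ S * b)
    (hb : b ≤ (1 - κ) * (a * β)) (hl : (lam + κ) * a ≤ l) (hβ : 0 ≤ β)
    (hβC : β ≤ C * a * T ^ 2) (hb0 : 0 ≤ b)
    (hX : 2 + K * lam / T + lam ^ 2 / (κ * a * T) + 2 * C / κ ≤ K * a)
    (hKl : K * lam / T ≤ κ / 2) :
    energyProduction a K lam T u X S P b l β ≤ 0 := by
  have hP' : (P / T) ^ 2 ≤ S * (b / T ^ 2) := by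
    rw [div_pow, ← mul_div_assoc]; gcongr
  have hb' : b / T ^ 2 ≤ (1 - κ) * (a * (β / T ^ 2)) := by
    rw [← mul_div_assoc, ← mul_div_assoc]; gcongr
  have hl' : (lam + κ) * a / T ≤ l / T := by gcongr
  have hβ' : 0 ≤ β / T ^ 2 := by positivity
  have hd0 : 0 ≤ b / T ^ 2 := by positivity
  have hβC' : β / T ^ 2 ≤ C * a := by rw [div_le_iff₀ (by positivity)]; exact hβC
  have hQ : energyProduction a K lam T u X S P b l β =
      -2 * K * a * X ^ 2 + 2 * X ^ 2 - 2 * K * X * (P / T) - 2 * S - 4 * u * (P / T)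
    - u ^ 2 * (l / T + b / T ^ 2)
    + (K * (X ^ 2 + S) + 2 * (u * X) + a * u ^ 2) * (lam / T - β / T ^ 2) := by
    rw [energyProduction]; ring
  rw [hQ]
  clear hQ hP hb hl hβC
  generalize P / T = p at *
  generalize b / T ^ 2 = d at *
  generalize β / T ^ 2 = β' at *
  have e1 : -2 * K * X * p ≤ K * a * X ^ 2 + K * β' * S := by
    refine le_add_of_sq_le (by positivity) (by positivity) ?_
    have : p ^ 2 ≤ S * (a * β') := hP'.trans (by gcongr; nlinarith [mul_nonneg ha.le hβ'])
    nlinarith [mul_le_mul_of_nonneg_left this (by positivity : 0 ≤ 4 * K ^ 2 * X ^ 2)]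
  obtain ⟨m, hm⟩ : ∃ m, m = 1 - κ / 4 := ⟨_, rfl⟩
  have hμ : 0 < m := by linarith
  have hm0 : m ≠ 0 := hμ.ne'
  have e2 : -4 * u * p ≤ 2 * m * S + 2 * u ^ 2 * d / m := by
    refine le_add_of_sq_le (by positivity) (by positivity) ?_
    have : 4 * (2 * m * S * (2 * u ^ 2 * d / m)) = 16 * u ^ 2 * (S * d) := by
      field_simp; ring
    rw [this]
    nlinarith [mul_le_mul_of_nonneg_left hP' (by positivity : 0 ≤ 16 * u ^ 2)]
  have e3 : 2 * d / m - d ≤ (1 - κ / 2) * (a * β') := by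
    have : 2 * d / m - d = d * (1 + κ / 4) / m := by
      rw [eq_div_iff hm0, sub_mul, div_mul_cancel₀ _ hm0, hm]; ring
    rw [this, div_le_iff₀ hμ, hm]
    calc d * (1 + κ / 4) ≤ (1 - κ) * (a * β') * (1 + κ / 4) := by gcongr
      _ = (1 - κ) * (1 + κ / 4) * (a * β') := by ring
      _ ≤ (1 - κ / 2) * (1 - κ / 4) * (a * β') := by
        refine mul_le_mul_of_nonneg_right ?_ (mul_nonneg ha.le hβ')
        nlinarith [sq_nonneg κ]
      _ = _ := by ring
  have e4 : 2 * (u * X) * (lam / T) ≤ κ * a * u ^ 2 / T + lam ^ 2 / (κ * a * T) * X ^ 2 := by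
    refine le_add_of_sq_le (by positivity) (by positivity) (le_of_eq ?_)
    field_simp
    ring
  have e5 : -2 * u * X * β' ≤ κ / 2 * a * β' * u ^ 2 + 2 * C / κ * X ^ 2 := by
    have h1 : -2 * u * X * β' ≤ κ / 2 * a * β' * u ^ 2 + 2 / κ * β' / a * X ^ 2 := by
      refine le_add_of_sq_le (by positivity) (by positivity) (le_of_eq ?_)
      field_simp
      ring
    have h2 : 2 / κ * β' / a * X ^ 2 ≤ 2 * C / κ * X ^ 2 := by
      refine mul_le_mul_of_nonneg_right ?_ (sq_nonneg X)
      rw [div_le_iff₀ ha]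
      calc 2 / κ * β' ≤ 2 / κ * (C * a) := by gcongr
        _ = 2 * C / κ * a := by ring
    linarith
  have e6 := mul_le_mul_of_nonneg_right hX (sq_nonneg X)
  have e7 := mul_le_mul_of_nonneg_right hKl hS
  have e8 := mul_le_mul_of_nonneg_left hl' (sq_nonneg u)
  have e9 := mul_le_mul_of_nonneg_left e3 (sq_nonneg u)
  have e10 : 0 ≤ K * X ^ 2 * β' := by positivity
  have e2' : 2 * u ^ 2 * d / m = u ^ 2 * (2 * d / m - d) + u ^ 2 * d := by ring
  have e8' : u ^ 2 * ((lam + κ) * a / T) = a * u ^ 2 * (lam / T) + κ * a * u ^ 2 / T := by ring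
  have e6' : (2 + K * lam / T + lam ^ 2 / (κ * a * T) + 2 * C / κ) * X ^ 2 =
    2 * X ^ 2 + K * X ^ 2 * (lam / T) + lam ^ 2 / (κ * a * T) * X ^ 2 + 2 * C / κ * X ^ 2 := by ring
  have e7' : K * lam / T * S = K * S * (lam / T) := by ring
  rw [e2'] at e2
  rw [e8'] at e8
  rw [e6'] at e6
  rw [e7'] at e7
  generalize 2 * d / m - d = y1 at *
  generalize lam / T = y2 at *
  generalize κ * a * u ^ 2 / T = y3 at *
  generalize lam ^ 2 / (κ * a * T) = y4 at *
  generalize 2 * C / κ = y5 at *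
  generalize l / T = y6 at *
  subst hm
  linarith

end WeightedEnergyInequality

section RadialWeight

variable {N : ℕ}

/-- The radial weight `c (1 + |x|²)^(1 + α/2) + L (1 + |x|²) + M`. -/
def radialWeight (α c L M : ℝ) (x : EuclideanSpace ℝ (Fin N)) : ℝ :=
  c * (1 + ‖x‖ ^ 2) ^ (1 + α / 2) + L * (1 + ‖x‖ ^ 2) + M

variable {α c L M : ℝ}

lemma contDiff_one_add_norm_sq_rpow (r : ℝ) {n : WithTop ℕ∞} :
    ContDiff ℝ n (fun x : EuclideanSpace ℝ (Fin N) => (1 + ‖x‖ ^ 2) ^ r) :=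
  (contDiff_const.add (contDiff_norm_sq ℝ)).rpow_const_of_ne fun x => by positivity

lemma contDiff_radialWeight {n : WithTop ℕ∞} :
    ContDiff ℝ n (radialWeight α c L M : EuclideanSpace ℝ (Fin N) → ℝ) :=
  ((contDiff_const.mul (contDiff_one_add_norm_sq_rpow _)).add
    (contDiff_const.mul (contDiff_const.add (contDiff_norm_sq ℝ)))).add contDiff_const

lemma hasDerivAt_one_add_norm_sq_line (x : EuclideanSpace ℝ (Fin N)) (i : Fin N) :
    HasDerivAt (fun r : ℝ => 1 + ‖x + r • EuclideanSpace.single i (1 : ℝ)‖ ^ 2) (2 * x i) 0 := by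
  have h := (hasStrictFDerivAt_norm_sq x).hasFDerivAt.hasLineDerivAt (EuclideanSpace.single i 1)
  refine (HasDerivAt.const_add 1 h).congr_deriv ?_
  simp [EuclideanSpace.inner_single_right]

lemma fderiv_radialWeight_single (x : EuclideanSpace ℝ (Fin N)) (i : Fin N) :
    fderiv ℝ (radialWeight α c L M) x (EuclideanSpace.single i 1) =
      (c * (1 + α / 2) * (1 + ‖x‖ ^ 2) ^ (α / 2) + L) * (2 * x i) := by
  have hq := hasDerivAt_one_add_norm_sq_line x i
  have h1 := hq.rpow_const (p := 1 + α / 2) (Or.inl (by positivity))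
  refine fderiv_single_eq_of_hasDerivAt
    ((contDiff_radialWeight (n := 1)).differentiable (by simp) x)
    ((((h1.const_mul c).add (hq.const_mul L)).add_const M).congr_deriv ?_)
  simp
  ring

lemma sum_sq_eq_norm_sq (x : EuclideanSpace ℝ (Fin N)) : ∑ i, x i ^ 2 = ‖x‖ ^ 2 := by
  rw [EuclideanSpace.real_norm_sq_eq]

lemma sum_sq_fderiv_radialWeight (x : EuclideanSpace ℝ (Fin N)) :
    ∑ i, (fderiv ℝ (radialWeight α c L M) x (EuclideanSpace.single i 1)) ^ 2 =
      4 * (c * (1 + α / 2) * (1 + ‖x‖ ^ 2) ^ (α / 2) + L) ^ 2 * ‖x‖ ^ 2 := by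
  simp only [fderiv_radialWeight_single, mul_pow]
  rw [← Finset.mul_sum, ← Finset.mul_sum, sum_sq_eq_norm_sq]
  ring

lemma lap_radialWeight (x : EuclideanSpace ℝ (Fin N)) :
    lap (radialWeight α c L M) x =
      2 * N * (c * (1 + α / 2) * (1 + ‖x‖ ^ 2) ^ (α / 2) + L)
        + 2 * c * (1 + α / 2) * α * (1 + ‖x‖ ^ 2) ^ (α / 2 - 1) * ‖x‖ ^ 2 := by
  have h : ∀ i, fderiv ℝ (fun z => fderiv ℝ (radialWeight α c L M) z (EuclideanSpace.single i 1))
      x (EuclideanSpace.single i 1) = 2 * (c * (1 + α / 2) * (1 + ‖x‖ ^ 2) ^ (α / 2) + L)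
        + 2 * c * (1 + α / 2) * α * (1 + ‖x‖ ^ 2) ^ (α / 2 - 1) * x i ^ 2 := by
    intro i
    have hq := hasDerivAt_one_add_norm_sq_line x i
    have h1 := hq.rpow_const (p := α / 2) (Or.inl (by positivity))
    have h2 : HasDerivAt (fun r : ℝ => (x + r • EuclideanSpace.single i (1 : ℝ)) i) 1 0 := by
      simpa using (hasDerivAt_id (0 : ℝ)).const_add (x i)
    refine fderiv_single_eq_of_hasDerivAt ?_ ?_
    · have : ContDiff ℝ 1 (fun z => fderiv ℝ (radialWeight α c L M) z
          (EuclideanSpace.single i 1)) :=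
        ((contDiff_radialWeight (n := 2)).fderiv_right (m := 1) (by norm_num)).clm_apply
          contDiff_const
      exact this.differentiable (by simp) x
    · simp only [fderiv_radialWeight_single]
      refine (((h1.const_mul (c * (1 + α / 2))).add_const L).mul (h2.const_mul 2)).congr_deriv ?_
      simp
      ring
  rw [lap, Finset.sum_congr rfl fun i _ => h i, Finset.sum_add_distrib, ← Finset.mul_sum,
    ← Finset.mul_sum, sum_sq_eq_norm_sq]
  simp
  ring

end RadialWeight

section AdmissibleWeight

variable {N : ℕ} {α : ℝ} {Ω : Set (EuclideanSpace ℝ (Fin N))} {a : EuclideanSpace ℝ (Fin N) → ℝ}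
  {a₀ : ℝ}

lemma exists_radius_of_eventually_cocompact {p : EuclideanSpace ℝ (Fin N) → Prop}
    (h : ∀ᶠ x in cocompact (EuclideanSpace ℝ (Fin N)), p x) : ∃ ρ : ℝ, ∀ x, ρ < ‖x‖ → p x := by
  obtain ⟨k, hk, hkp⟩ := mem_cocompact.1 h
  obtain ⟨ρ, hρ⟩ := hk.isBounded.subset_closedBall (0 : EuclideanSpace ℝ (Fin N))
  refine ⟨ρ, fun x hx => hkp fun hxk => ?_⟩
  have := mem_closedBall_zero_iff.1 (hρ hxk)
  linarith

lemma tendsto_one_add_norm_sq_atTop :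
    Tendsto (fun x : EuclideanSpace ℝ (Fin N) => 1 + ‖x‖ ^ 2)
      (cocompact (EuclideanSpace ℝ (Fin N))) atTop :=
  tendsto_atTop_add_const_left _ _
    ((tendsto_pow_atTop two_ne_zero).comp (tendsto_norm_cocompact_atTop))

lemma tendsto_div_one_add_norm_sq_rpow
    (halim : Tendsto (fun x : EuclideanSpace ℝ (Fin N) => ‖x‖ ^ (-α) * a x)
      (cocompact (EuclideanSpace ℝ (Fin N))) (nhds a₀)) :
    Tendsto (fun x => a x / (1 + ‖x‖ ^ 2) ^ (α / 2))
      (cocompact (EuclideanSpace ℝ (Fin N))) (nhds a₀) := by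
  have h1 : Tendsto (fun x : EuclideanSpace ℝ (Fin N) => (1 - (1 + ‖x‖ ^ 2)⁻¹) ^ (α / 2))
      (cocompact (EuclideanSpace ℝ (Fin N))) (nhds 1) := by
    have := (tendsto_const_nhds (x := (1 : ℝ))).sub
      (tendsto_inv_atTop_zero.comp (tendsto_one_add_norm_sq_atTop (N := N)))
    simpa using this.rpow_const (p := α / 2) (Or.inl (by norm_num))
  have h2 := halim.mul h1
  rw [mul_one] at h2
  refine h2.congr' ?_
  filter_upwards [(tendsto_norm_cocompact_atTop).eventually_gt_atTop 0] with x hx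
  have h3 : 1 - (1 + ‖x‖ ^ 2)⁻¹ = ‖x‖ ^ 2 / (1 + ‖x‖ ^ 2) := by field_simp; ring
  have h4 : (‖x‖ ^ 2) ^ (α / 2) = ‖x‖ ^ α := by
    rw [← Real.rpow_natCast, ← Real.rpow_mul (norm_nonneg x)]
    congr 1
    push_cast
    ring
  have h5 : ‖x‖ ^ α ≠ 0 := (Real.rpow_pos_of_pos hx α).ne'
  rw [h3, Real.div_rpow (by positivity) (by positivity), h4, Real.rpow_neg (norm_nonneg x)]
  field_simp

lemma exists_pos_mul_rpow_le (ha : ContinuousOn a (closure Ω))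
    (hapos : ∀ x ∈ closure Ω, 0 < a x) (ha₀ : 0 < a₀)
    (halim : Tendsto (fun x : EuclideanSpace ℝ (Fin N) => ‖x‖ ^ (-α) * a x)
      (cocompact (EuclideanSpace ℝ (Fin N))) (nhds a₀)) :
    ∃ r > (0 : ℝ), ∀ x ∈ closure Ω, r * (1 + ‖x‖ ^ 2) ^ (α / 2) ≤ a x := by
  obtain ⟨ρ, hρ⟩ := exists_radius_of_eventually_cocompact
    ((tendsto_div_one_add_norm_sq_rpow halim).eventually_const_lt (half_lt_self ha₀))
  have hk : IsCompact (closure Ω ∩ Metric.closedBall 0 ρ) :=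
    (isCompact_closedBall _ _).inter_left isClosed_closure
  have hc : ContinuousOn (fun x => a x / (1 + ‖x‖ ^ 2) ^ (α / 2))
      (closure Ω ∩ Metric.closedBall 0 ρ) :=
    (ha.mono Set.inter_subset_left).div
      (contDiff_one_add_norm_sq_rpow (n := 0) _).continuous.continuousOn fun x _ => by positivity
  obtain ⟨m, hm, hmle⟩ : ∃ m > (0 : ℝ), ∀ x ∈ closure Ω ∩ Metric.closedBall 0 ρ,
      m ≤ a x / (1 + ‖x‖ ^ 2) ^ (α / 2) := by
    rcases (closure Ω ∩ Metric.closedBall 0 ρ).eq_empty_or_nonempty with he | hne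
    · exact ⟨1, one_pos, fun x hx => by rw [he] at hx; exact hx.elim⟩
    · obtain ⟨y, hy, hymin⟩ := hk.exists_isMinOn hne hc
      exact ⟨_, div_pos (hapos y hy.1) (by positivity), fun x hx => hymin hx⟩
  refine ⟨min m (a₀ / 2), lt_min hm (half_pos ha₀), fun x hx => ?_⟩
  rw [← le_div_iff₀ (by positivity)]
  rcases lt_or_ge ρ ‖x‖ with h | h
  · exact (min_le_right _ _).trans (hρ x h).le
  · exact (min_le_left _ _).trans (hmle x ⟨hx, mem_closedBall_zero_iff.2 h⟩)

lemma exists_bound_on_closedBall (ha : ContinuousOn a (closure Ω)) (ρ : ℝ) :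
    ∃ A : ℝ, 0 ≤ A ∧ ∀ x ∈ closure Ω, ‖x‖ ≤ ρ → |a x| ≤ A := by
  have hk : IsCompact (closure Ω ∩ Metric.closedBall 0 ρ) :=
    (isCompact_closedBall _ _).inter_left isClosed_closure
  obtain ⟨A, hA⟩ := hk.exists_bound_of_continuousOn (ha.mono Set.inter_subset_left)
  exact ⟨max A 0, le_max_right _ _, fun x hx hxρ =>
    (hA x ⟨hx, mem_closedBall_zero_iff.2 hxρ⟩).trans (le_max_left _ _)⟩

/-- For `λ < (N + α) / (2 + α)` there is a weight `B` with `ΔB ≥ (λ + κ) a` and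
`|∇B|² ≤ (1 - κ) a B` on the closure of `Ω`. -/
lemma exists_admissible_weight (hα : 0 < α) (hN : 0 < N) (ha : ContinuousOn a (closure Ω))
    (hapos : ∀ x ∈ closure Ω, 0 < a x) (ha₀ : 0 < a₀)
    (halim : Tendsto (fun x : EuclideanSpace ℝ (Fin N) => ‖x‖ ^ (-α) * a x)
      (cocompact (EuclideanSpace ℝ (Fin N))) (nhds a₀))
    {lam : ℝ} (hlam : 0 ≤ lam) (hlam' : lam < (N + α) / (2 + α)) :
    ∃ (B : EuclideanSpace ℝ (Fin N) → ℝ) (κ C : ℝ), ContDiff ℝ 2 B ∧ 0 < κ ∧ κ < 1 ∧ 0 ≤ C ∧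
      ∀ x ∈ closure Ω, 0 ≤ B x ∧ B x ≤ C * a x * (1 + ‖x‖ ^ 2) ∧
        ∑ i, (fderiv ℝ B x (EuclideanSpace.single i 1)) ^ 2 ≤ (1 - κ) * (a x * B x) ∧
        (lam + κ) * a x ≤ lap B x := by
  have hN' : (0 : ℝ) < N := Nat.cast_pos.2 hN
  obtain ⟨r, hr, hra⟩ := exists_pos_mul_rpow_le ha hapos ha₀ halim
  have hD : lam * a₀ / ((2 + α) * (N + α)) < a₀ / (2 + α) ^ 2 := by
    rw [lt_div_iff₀ (by positivity)] at hlam'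
    rw [div_lt_div_iff₀ (by positivity) (by positivity)]
    have : a₀ * (2 + α) * (lam * (2 + α)) < a₀ * (2 + α) * (N + α) := by gcongr
    linarith
  obtain ⟨c, hc1, hc2⟩ := exists_between hD
  have hc : 0 < c := lt_of_le_of_lt (by positivity) hc1
  rw [div_lt_iff₀ (by positivity)] at hc1
  rw [lt_div_iff₀ (by positivity)] at hc2
  obtain ⟨ε, hε0, hε⟩ := exists_between (lt_min (sub_pos.2 hc1) (sub_pos.2 hc2))
  obtain ⟨hε1, hε2⟩ := lt_min_iff.1 hε
  obtain ⟨κ, rfl⟩ : ∃ κ, ε = κ * a₀ := ⟨ε / a₀, by field_simp⟩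
  have hκ : 0 < κ := pos_of_mul_pos_left hε0 ha₀.le
  have hκ1 : κ < 1 := by
    by_contra! h
    nlinarith [mul_pos hc (pow_pos (by linarith : 0 < 2 + α) 2)]
  have hlim := tendsto_div_one_add_norm_sq_rpow halim
  have hinv : Tendsto (fun x : EuclideanSpace ℝ (Fin N) => (1 + ‖x‖ ^ 2)⁻¹)
      (cocompact (EuclideanSpace ℝ (Fin N))) (nhds 0) :=
    tendsto_inv_atTop_zero.comp (tendsto_one_add_norm_sq_atTop (N := N))
  have hinv' : Tendsto (fun x : EuclideanSpace ℝ (Fin N) => ((1 + ‖x‖ ^ 2) ^ (α / 2))⁻¹)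
      (cocompact (EuclideanSpace ℝ (Fin N))) (nhds 0) :=
    tendsto_inv_atTop_zero.comp ((tendsto_rpow_atTop (by positivity)).comp
      (tendsto_one_add_norm_sq_atTop (N := N)))
  obtain ⟨ρ₁, hρ₁⟩ : ∃ ρ₁ : ℝ, ∀ x : EuclideanSpace ℝ (Fin N), ρ₁ < ‖x‖ →
      (lam + κ) * (a x / (1 + ‖x‖ ^ 2) ^ (α / 2)) <
        2 * N * (c * (1 + α / 2)) + 2 * c * (1 + α / 2) * α * (1 - (1 + ‖x‖ ^ 2)⁻¹) := by
    refine exists_radius_of_eventually_cocompact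
      ((hlim.const_mul (lam + κ)).eventually_lt
        (((hinv.const_sub 1).const_mul _).const_add _) ?_)
    nlinarith
  obtain ⟨A₁, hA₁, hA₁a⟩ := exists_bound_on_closedBall ha ρ₁
  obtain ⟨L, hL, hL0⟩ : ∃ L, (lam + κ) * A₁ ≤ 2 * N * L ∧ 0 ≤ L :=
    ⟨(lam + κ) * A₁ / (2 * N), by field_simp; rfl, by positivity⟩
  obtain ⟨ρ₂, hρ₂⟩ : ∃ ρ₂ : ℝ, ∀ x : EuclideanSpace ℝ (Fin N), ρ₂ < ‖x‖ →
      4 * (c * (1 + α / 2) + L * ((1 + ‖x‖ ^ 2) ^ (α / 2))⁻¹) ^ 2 * (1 - (1 + ‖x‖ ^ 2)⁻¹) <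
        (1 - κ) * c * (a x / (1 + ‖x‖ ^ 2) ^ (α / 2)) := by
    refine exists_radius_of_eventually_cocompact
      ((((((hinv'.const_mul L).const_add _).pow 2).const_mul 4).mul
        (hinv.const_sub 1)).eventually_lt (hlim.const_mul ((1 - κ) * c)) ?_)
    nlinarith
  obtain ⟨A₂, hA₂, hA₂b⟩ := exists_bound_on_closedBall (Ω := Ω) (a := fun x =>
    4 * (c * (1 + α / 2) * (1 + ‖x‖ ^ 2) ^ (α / 2) + L) ^ 2 * ‖x‖ ^ 2) (by
      have := (contDiff_one_add_norm_sq_rpow (N := N) (α / 2) (n := 0)).continuous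
      fun_prop) ρ₂
  obtain ⟨M, hM, hM0⟩ : ∃ M, A₂ ≤ (1 - κ) * (r * M) ∧ 0 ≤ M :=
    have : 0 < 1 - κ := by linarith
    ⟨A₂ / ((1 - κ) * r), by field_simp; rfl, by positivity⟩
  refine ⟨radialWeight α c L M, κ, (c + L + M) / r, contDiff_radialWeight, hκ, hκ1, by positivity,
    fun x hx => ?_⟩
  have hax := hapos x hx
  have hs1 : 1 ≤ 1 + ‖x‖ ^ 2 := by nlinarith [sq_nonneg ‖x‖]
  have hs0 : 0 < 1 + ‖x‖ ^ 2 := by linarith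
  have hw1 : 1 ≤ (1 + ‖x‖ ^ 2) ^ (α / 2) := Real.one_le_rpow hs1 (by positivity)
  have hra' : r ≤ a x := le_trans (by nlinarith) (hra x hx)
  have hsplit : (1 + ‖x‖ ^ 2) ^ (1 + α / 2) = (1 + ‖x‖ ^ 2) * (1 + ‖x‖ ^ 2) ^ (α / 2) := by
    rw [Real.rpow_add hs0, Real.rpow_one]
  have hsplit' : (1 + ‖x‖ ^ 2) ^ (α / 2 - 1) = (1 + ‖x‖ ^ 2) ^ (α / 2) * (1 + ‖x‖ ^ 2)⁻¹ := by
    rw [Real.rpow_sub hs0, Real.rpow_one, div_eq_mul_inv]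
  refine ⟨by rw [radialWeight]; positivity, ?_, ?_, ?_⟩
  · have hw2 := hra x hx
    have hB : radialWeight α c L M x ≤
        (c + L + M) * ((1 + ‖x‖ ^ 2) * (1 + ‖x‖ ^ 2) ^ (α / 2)) := by
      rw [radialWeight, hsplit]
      have h1 : (1 + ‖x‖ ^ 2) ≤ (1 + ‖x‖ ^ 2) * (1 + ‖x‖ ^ 2) ^ (α / 2) :=
        le_mul_of_one_le_right hs0.le hw1
      nlinarith [mul_le_mul_of_nonneg_left h1 hL0, mul_le_mul_of_nonneg_left (hs1.trans h1) hM0]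
    calc radialWeight α c L M x
        ≤ (c + L + M) * ((1 + ‖x‖ ^ 2) * (1 + ‖x‖ ^ 2) ^ (α / 2)) := hB
      _ = (c + L + M) / r * (r * (1 + ‖x‖ ^ 2) ^ (α / 2)) * (1 + ‖x‖ ^ 2) := by field_simp
      _ ≤ (c + L + M) / r * a x * (1 + ‖x‖ ^ 2) := by gcongr
  · rw [sum_sq_fderiv_radialWeight]
    rcases lt_or_ge ρ₂ ‖x‖ with h | h
    · have h1 := hρ₂ x h
      rw [radialWeight, hsplit]
      generalize (1 + ‖x‖ ^ 2) ^ (α / 2) = w at h1 hw1 ⊢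
      have hw0 : 0 < w := by linarith
      have h2 := mul_lt_mul_of_pos_right h1 (by positivity : 0 < w ^ 2 * (1 + ‖x‖ ^ 2))
      have e1 : 4 * (c * (1 + α / 2) + L * w⁻¹) ^ 2 * (1 - (1 + ‖x‖ ^ 2)⁻¹)
          * (w ^ 2 * (1 + ‖x‖ ^ 2)) = 4 * (c * (1 + α / 2) * w + L) ^ 2 * ‖x‖ ^ 2 := by
        field_simp
        ring
      have e2 : (1 - κ) * c * (a x / w) * (w ^ 2 * (1 + ‖x‖ ^ 2)) =
          (1 - κ) * (a x * (c * ((1 + ‖x‖ ^ 2) * w))) := by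
        field_simp
      rw [e1, e2] at h2
      refine h2.le.trans ?_
      have hLM : c * ((1 + ‖x‖ ^ 2) * w) ≤ c * ((1 + ‖x‖ ^ 2) * w) + L * (1 + ‖x‖ ^ 2) + M := by
        linarith [mul_nonneg hL0 hs0.le]
      exact mul_le_mul_of_nonneg_left (mul_le_mul_of_nonneg_left hLM hax.le) (by linarith)
    · refine (le_abs_self _).trans ((hA₂b x hx h).trans (hM.trans ?_))
      have hMB : M ≤ radialWeight α c L M x := by
        rw [radialWeight]
        have : 0 ≤ c * (1 + ‖x‖ ^ 2) ^ (1 + α / 2) + L * (1 + ‖x‖ ^ 2) := by positivity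
        linarith
      exact mul_le_mul_of_nonneg_left (mul_le_mul hra' hMB hM0 hax.le) (by linarith)
  · rw [lap_radialWeight, hsplit']
    rcases lt_or_ge ρ₁ ‖x‖ with h | h
    · have h1 := hρ₁ x h
      generalize (1 + ‖x‖ ^ 2) ^ (α / 2) = w at h1 hw1 ⊢
      have hw0 : 0 < w := by linarith
      have h2 := mul_lt_mul_of_pos_right h1 hw0
      have e1 : (lam + κ) * (a x / w) * w = (lam + κ) * a x := by field_simp
      have e2 : (1 - (1 + ‖x‖ ^ 2)⁻¹) = (1 + ‖x‖ ^ 2)⁻¹ * ‖x‖ ^ 2 := by field_simp; ring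
      rw [e1, e2] at h2
      have h3 := mul_nonneg hN'.le hL0
      linarith
    · have h1 : (lam + κ) * a x ≤ (lam + κ) * A₁ :=
        mul_le_mul_of_nonneg_left ((le_abs_self _).trans (hA₁a x hx h)) (by linarith)
      have h2 : 0 ≤ 2 * N * (c * (1 + α / 2) * (1 + ‖x‖ ^ 2) ^ (α / 2)) := by positivity
      have h3 : 0 ≤ 2 * c * (1 + α / 2) * α * ((1 + ‖x‖ ^ 2) ^ (α / 2) * (1 + ‖x‖ ^ 2)⁻¹)
        * ‖x‖ ^ 2 := by positivity
      linarith

end AdmissibleWeight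

section WeightedEnergyEstimate

variable {N : ℕ} {α : ℝ} {Ω : Set (EuclideanSpace ℝ (Fin N))} {a : EuclideanSpace ℝ (Fin N) → ℝ}
  {a₀ R₀ : ℝ} {u : EuclideanSpace ℝ (Fin N) → ℝ → ℝ} {B : EuclideanSpace ℝ (Fin N) → ℝ}
  {K lam t₀ : ℝ}

namespace IsDampedWaveSolution

lemma energyDensity_eq_zero_of_lt_norm (hu : IsDampedWaveSolution 3 Ω a R₀ u)
    {x : EuclideanSpace ℝ (Fin N)} {t : ℝ} (ht : 0 ≤ t) (hx : R₀ + t < ‖x‖) :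
    energyDensity a u B K lam t₀ x t = 0 := by
  simp [energyDensity, hu.eq_zero_of_lt_norm ht hx, hu.dt_eq_zero_of_lt_norm ht hx,
    hu.dx_eq_zero_of_lt_norm _ ht hx]

lemma energyFlux_eq_zero_of_lt_norm (hu : IsDampedWaveSolution 3 Ω a R₀ u) (i : Fin N)
    {x : EuclideanSpace ℝ (Fin N)} {t : ℝ} (ht : 0 ≤ t) (hx : R₀ + t < ‖x‖) :
    energyFlux u B K lam t₀ i x t = 0 := by
  simp [energyFlux, hu.eq_zero_of_lt_norm ht hx, hu.dx_eq_zero_of_lt_norm _ ht hx]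

lemma energyFlux_eq_zero_of_mem_frontier (hu : IsDampedWaveSolution 3 Ω a R₀ u) (i : Fin N)
    {x : EuclideanSpace ℝ (Fin N)} (hx : x ∈ frontier Ω) {t : ℝ} (ht : 0 < t) :
    energyFlux u B K lam t₀ i x t = 0 := by
  simp [energyFlux, hu.eq_zero_of_mem_frontier hx ht, hu.dt_eq_zero_of_mem_frontier hx ht]

end IsDampedWaveSolution

lemma expWeight_pos (ht₀ : 0 < t₀) {x : EuclideanSpace ℝ (Fin N)} {t : ℝ} (ht : 0 ≤ t) :
    0 < expWeight B lam t₀ x t :=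
  mul_pos (Real.rpow_pos_of_pos (by linarith) _) (Real.exp_pos _)

lemma rpow_le_expWeight (ht₀ : 0 < t₀) {x : EuclideanSpace ℝ (Fin N)} (hB : 0 ≤ B x) {t : ℝ}
    (ht : 0 ≤ t) : (t₀ + t) ^ lam ≤ expWeight B lam t₀ x t := by
  have hT : 0 < t₀ + t := by linarith
  exact le_mul_of_one_le_right (Real.rpow_nonneg hT.le _)
    (Real.one_le_exp (div_nonneg hB hT.le))

/-- Monotonicity of the weighted energy for an admissible weight. -/
lemma exists_setIntegral_energyDensity_le (hα : 0 < α) (hN : 0 < N) (hΩ : IsOpen Ω)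
    (ha : ContinuousOn a (closure Ω)) (hapos : ∀ x ∈ closure Ω, 0 < a x) (ha₀ : 0 < a₀)
    (halim : Tendsto (fun x : EuclideanSpace ℝ (Fin N) => ‖x‖ ^ (-α) * a x)
      (cocompact (EuclideanSpace ℝ (Fin N))) (nhds a₀))
    (hlam : 0 ≤ lam) (hlam' : lam < (N + α) / (2 + α)) (R₀ : ℝ) :
    ∃ (B : EuclideanSpace ℝ (Fin N) → ℝ) (K t₀ : ℝ), ContDiff ℝ 2 B ∧ 0 ≤ K ∧ 1 ≤ t₀ ∧
      (∀ x ∈ closure Ω, 0 ≤ B x ∧ 2 ≤ K * a x) ∧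
      ∀ u, IsDampedWaveSolution 3 Ω a R₀ u → ∀ t ≥ (0 : ℝ),
        ∫ x in Ω, energyDensity a u B K lam t₀ x t ≤
          ∫ x in Ω, energyDensity a u B K lam t₀ x 0 := by
  obtain ⟨B, κ, C, hB, hκ, hκ1, hC, hBx⟩ :=
    exists_admissible_weight hα hN ha hapos ha₀ halim hlam hlam'
  obtain ⟨r, hr, hra⟩ := exists_pos_mul_rpow_le ha hapos ha₀ halim
  have hra' : ∀ x ∈ closure Ω, r ≤ a x := fun x hx =>
    (le_mul_of_one_le_right hr.le (Real.one_le_rpow (by nlinarith [sq_nonneg ‖x‖])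
      (by positivity))).trans (hra x hx)
  obtain ⟨K, hK0, hK⟩ : ∃ K, 0 ≤ K ∧
      K * r = 2 + κ / 2 + lam ^ 2 / (κ * r) + 2 * (2 * C) / κ :=
    ⟨(2 + κ / 2 + lam ^ 2 / (κ * r) + 2 * (2 * C) / κ) / r, by positivity, by field_simp⟩
  have hKa : ∀ x ∈ closure Ω, K * r ≤ K * a x := fun x hx =>
    mul_le_mul_of_nonneg_left (hra' x hx) hK0
  have h2 : 2 ≤ K * r := by
    have : 0 ≤ κ / 2 + lam ^ 2 / (κ * r) + 2 * (2 * C) / κ := by positivity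
    linarith
  obtain ⟨t₀, ht1, htR, htK⟩ : ∃ t₀, 1 ≤ t₀ ∧ R₀ ≤ t₀ ∧ 2 * K * lam / κ ≤ t₀ :=
    ⟨max 1 (max R₀ (2 * K * lam / κ)), le_max_left _ _, (le_max_left _ _).trans (le_max_right _ _),
      (le_max_right _ _).trans (le_max_right _ _)⟩
  have ht₀ : 0 < t₀ := by linarith
  refine ⟨B, K, t₀, hB, hK0, ht1, fun x hx => ⟨(hBx x hx).1, h2.trans (hKa x hx)⟩,
    fun u hu t ht => ?_⟩
  refine setIntegral_le_of_deriv_le_div hΩ (R₀ := R₀) (F := energyFlux u B K lam t₀)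
    (continuousOn_energyDensity hu.contDiff hB.continuous ha ht₀)
    (continuousOn_energyDensityDeriv hu.contDiff hB.continuous ha ht₀)
    (fun x _ t ht => hasDerivAt_energyDensity hu.contDiff ht₀ x ht.le)
    (fun x _ t ht hx => hu.energyDensity_eq_zero_of_lt_norm ht hx)
    (fun i t _ => contDiff_energyFlux hu.contDiff hB i t)
    (fun i t ht x hx => hu.energyFlux_eq_zero_of_lt_norm i ht.le hx)
    (fun i t ht x hx => hu.energyFlux_eq_zero_of_mem_frontier i hx ht)
    (fun x hx t ht => ?_) t ht
  rw [← sub_nonpos, energyDensityDeriv_sub_sum_dx_energyFlux hu hB ht₀ hx ht]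
  refine mul_nonpos_of_nonpos_of_nonneg ?_ (expWeight_pos ht₀ ht.le).le
  rcases lt_or_ge (R₀ + t) ‖x‖ with h | h
  · simp [energyProduction, hu.eq_zero_of_lt_norm ht.le h, hu.dt_eq_zero_of_lt_norm ht.le h,
      hu.dx_eq_zero_of_lt_norm _ ht.le h]
  have hxc := subset_closure hx
  obtain ⟨hB0, hB1, hB2, hB3⟩ := hBx x hxc
  have hT1 : 1 ≤ t₀ + t := by linarith
  have hT : 0 < t₀ + t := by linarith
  have hax := hapos x hxc
  have hKl : K * lam / (t₀ + t) ≤ κ / 2 := by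
    rw [div_le_iff₀ hκ] at htK
    rw [div_le_iff₀ hT]
    nlinarith
  refine energyProduction_nonpos (C := 2 * C) hax hT hK0 hκ hκ1
    (Finset.sum_nonneg fun i _ => sq_nonneg _) (Finset.sum_mul_sq_le_sq_mul_sq _ _ _) hB2 hB3 hB0
    (hB1.trans ?_) (Finset.sum_nonneg fun i _ => sq_nonneg _) ?_ hKl
  · have hs : 1 + ‖x‖ ^ 2 ≤ 2 * (t₀ + t) ^ 2 := by
      have := pow_le_pow_left₀ (norm_nonneg x) (h.trans (by linarith : R₀ + t ≤ t₀ + t)) 2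
      nlinarith
    calc C * a x * (1 + ‖x‖ ^ 2) ≤ C * a x * (2 * (t₀ + t) ^ 2) := by gcongr
      _ = _ := by ring
  · refine le_trans ?_ (hKa x hxc)
    have h3 : lam ^ 2 / (κ * a x * (t₀ + t)) ≤ lam ^ 2 / (κ * r) := by
      have h4 : r ≤ a x * (t₀ + t) := (hra' x hxc).trans (le_mul_of_one_le_right hax.le hT1)
      rw [mul_assoc]
      gcongr
    linarith

/-- A continuous function on the closure of `Ω` that vanishes far away is integrable on `Ω`. -/
lemma integrableOn_of_eq_zero_of_lt_norm (hΩ : IsOpen Ω) {f : EuclideanSpace ℝ (Fin N) → ℝ}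
    (hf : ContinuousOn f (closure Ω)) {ρ : ℝ} (h : ∀ x ∈ Ω, ρ < ‖x‖ → f x = 0) :
    IntegrableOn f Ω := by
  have hk : IsCompact (closure Ω ∩ Metric.closedBall 0 ρ) :=
    (isCompact_closedBall _ _).inter_left isClosed_closure
  have h1 : IntegrableOn f (closure Ω ∩ Metric.closedBall 0 ρ) :=
    (hf.mono Set.inter_subset_left).integrableOn_compact hk
  refine (h1.mono_set (Set.inter_subset_inter_left _ subset_closure)).of_forall_sdiff_eq_zero
    hΩ.measurableSet fun x hx => h x hx.1 ?_
  by_contra! hle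
  exact hx.2 ⟨hx.1, mem_closedBall_zero_iff.2 hle⟩

/-- The squared size of the initial data. -/
def initialDensity (u : EuclideanSpace ℝ (Fin N) → ℝ → ℝ) (x : EuclideanSpace ℝ (Fin N)) : ℝ :=
  (u x 0) ^ 2 + ‖fderiv ℝ (fun y => u y 0) x‖ ^ 2 + (dt u x 0) ^ 2

lemma initialDensity_nonneg (u : EuclideanSpace ℝ (Fin N) → ℝ → ℝ)
    (x : EuclideanSpace ℝ (Fin N)) : 0 ≤ initialDensity u x := by
  rw [initialDensity]; positivity

lemma sum_sq_dx_le (u : EuclideanSpace ℝ (Fin N) → ℝ → ℝ) (x : EuclideanSpace ℝ (Fin N)) (t : ℝ) :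
    ∑ i, (dx u i x t) ^ 2 ≤ N * ‖fderiv ℝ (fun y => u y t) x‖ ^ 2 := by
  have h : ∀ i ∈ Finset.univ, (dx u i x t) ^ 2 ≤ ‖fderiv ℝ (fun y => u y t) x‖ ^ 2 := by
    intro i _
    have h1 := (fderiv ℝ (fun y => u y t) x).le_opNorm (EuclideanSpace.single i 1)
    rw [PiLp.norm_single, norm_one, mul_one] at h1
    rw [dx, ← sq_abs]
    exact pow_le_pow_left₀ (abs_nonneg _) h1 2
  simpa using Finset.sum_le_card_nsmul _ _ _ h

namespace IsDampedWaveSolution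

lemma fderiv_initial_eq_zero_of_lt_norm (hu : IsDampedWaveSolution 3 Ω a R₀ u)
    {x : EuclideanSpace ℝ (Fin N)} (hx : R₀ + 0 < ‖x‖) : fderiv ℝ (fun y => u y 0) x = 0 := by
  have h2 : (fun y => u y 0) =ᶠ[nhds x] fun _ => 0 := by
    filter_upwards [continuous_norm.continuousAt.eventually_mem (lt_mem_nhds hx)] with y hy
    exact hu.eq_zero_of_lt_norm le_rfl hy
  simp [h2.fderiv_eq]

lemma integrableOn_initial (hu : IsDampedWaveSolution 3 Ω a R₀ u) (hΩ : IsOpen Ω) :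
    IntegrableOn (fun x => (u x 0) ^ 2) Ω ∧
      IntegrableOn (fun x => ‖fderiv ℝ (fun y => u y 0) x‖ ^ 2) Ω ∧
      IntegrableOn (fun x => (dt u x 0) ^ 2) Ω := by
  have h0 : ContDiff ℝ 1 (fun x => u x 0) := contDiff_slice (hu.contDiff.of_le (by norm_num)) 0
  have h1 : ContDiff ℝ 2 (fun x => dt u x 0) :=
    contDiff_slice (contDiff_dt (m := 2) hu.contDiff (by norm_num)) 0
  refine ⟨?_, ?_, ?_⟩
  · exact integrableOn_of_eq_zero_of_lt_norm (ρ := R₀ + 0) hΩ (h0.continuous.pow 2).continuousOn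
      fun x _ hx => by simp [hu.eq_zero_of_lt_norm le_rfl hx]
  · exact integrableOn_of_eq_zero_of_lt_norm (ρ := R₀ + 0) hΩ
      ((h0.continuous_fderiv (by simp)).norm.pow 2).continuousOn
      fun x _ hx => by simp [hu.fderiv_initial_eq_zero_of_lt_norm hx]
  · exact integrableOn_of_eq_zero_of_lt_norm (ρ := R₀ + 0) hΩ (h1.continuous.pow 2).continuousOn
      fun x _ hx => by simp [hu.dt_eq_zero_of_lt_norm le_rfl hx]

lemma integrableOn_initialDensity (hu : IsDampedWaveSolution 3 Ω a R₀ u) (hΩ : IsOpen Ω) :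
    IntegrableOn (initialDensity u) Ω := by
  obtain ⟨h0, h1, h2⟩ := hu.integrableOn_initial hΩ
  exact (h0.add h1).add h2

lemma setIntegral_initialDensity_le (hu : IsDampedWaveSolution 3 Ω a R₀ u) (hΩ : IsOpen Ω) :
    ∫ x in Ω, initialDensity u x ≤
      sobNormSq 2 Ω (fun x => u x 0) + sobNormSq 1 Ω (fun x => deriv (u x) 0) := by
  obtain ⟨h0, h1, h2⟩ := hu.integrableOn_initial hΩ
  have h01 : IntegrableOn (fun x => (u x 0) ^ 2 + ‖fderiv ℝ (fun y => u y 0) x‖ ^ 2) Ω := h0.add h1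
  simp only [initialDensity]
  rw [integral_add h01 h2, integral_add h0 h1]
  have h3 : 0 ≤ ∫ x in Ω, ‖iteratedFDeriv ℝ 2 (fun x => u x 0) x‖ ^ 2 :=
    integral_nonneg fun x => by positivity
  have h4 : 0 ≤ ∫ x in Ω, ‖fderiv ℝ (fun x => deriv (u x) 0) x‖ ^ 2 :=
    integral_nonneg fun x => by positivity
  simp only [sobNormSq, Finset.sum_range_succ, Finset.range_zero, Finset.sum_empty, zero_add,
    norm_iteratedFDeriv_zero, norm_iteratedFDeriv_one, Real.norm_eq_abs, sq_abs, dt]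
  linarith

/-- Pointwise bound of the weighted energy density of the initial data. -/
lemma exists_energyDensity_zero_le (ha : ContinuousOn a (closure Ω)) (hB : Continuous B)
    (hK : 0 ≤ K) (ht₀ : 0 < t₀) (R₀ : ℝ) :
    ∃ C : ℝ, 0 ≤ C ∧ ∀ u, IsDampedWaveSolution 3 Ω a R₀ u → ∀ x ∈ Ω,
      energyDensity a u B K lam t₀ x 0 ≤ C * initialDensity u x := by
  obtain ⟨A, hA0, hA⟩ := exists_bound_on_closedBall ha R₀
  obtain ⟨W, hW0, hW⟩ := exists_bound_on_closedBall (Ω := Ω)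
    (a := fun x => expWeight B lam t₀ x 0)
    ((continuous_const.mul (hB.div_const _).rexp).continuousOn) R₀
  refine ⟨(K * N + K + 1 + A) * W, by positivity, fun u hu x hx => ?_⟩
  rcases lt_or_ge R₀ ‖x‖ with h | h
  · rw [hu.energyDensity_eq_zero_of_lt_norm le_rfl (by simpa using h)]
    exact mul_nonneg (by positivity) (initialDensity_nonneg u x)
  have hA' := (le_abs_self _).trans (hA x (subset_closure hx) h)
  have hW' := (le_abs_self _).trans (hW x (subset_closure hx) h)
  have hpos := (expWeight_pos (B := B) (lam := lam) (x := x) ht₀ le_rfl).le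
  have h1 := sum_sq_dx_le u x 0
  have h2 : K * ((dt u x 0) ^ 2 + ∑ i, (dx u i x 0) ^ 2) + 2 * (u x 0 * dt u x 0)
      + a x * (u x 0) ^ 2 ≤ (K * N + K + 1 + A) * initialDensity u x := by
    rw [initialDensity]
    have e1 := mul_le_mul_of_nonneg_left h1 hK
    have e2 := mul_le_mul_of_nonneg_right hA' (sq_nonneg (u x 0))
    have e3 := sq_nonneg (u x 0 - dt u x 0)
    have e4 : 0 ≤ (K * N + K) * (u x 0) ^ 2 := by positivity
    have e5 : 0 ≤ (K + 1 + A) * ‖fderiv ℝ (fun y => u y 0) x‖ ^ 2 := by positivity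
    have e6 : 0 ≤ (K * N + A) * (dt u x 0) ^ 2 := by positivity
    nlinarith
  calc energyDensity a u B K lam t₀ x 0
      ≤ (K * N + K + 1 + A) * initialDensity u x * expWeight B lam t₀ x 0 :=
        mul_le_mul_of_nonneg_right h2 hpos
    _ ≤ (K * N + K + 1 + A) * initialDensity u x * W :=
        mul_le_mul_of_nonneg_left hW' (mul_nonneg (by positivity) (initialDensity_nonneg u x))
    _ = _ := by ring

lemma le_energyDensity (ht₀ : 0 < t₀) {x : EuclideanSpace ℝ (Fin N)}
    (hB : 0 ≤ B x) (hK : 0 ≤ K) (hax : 0 ≤ a x) (hKa : 2 ≤ K * a x) {t : ℝ} (ht : 0 ≤ t) :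
    (t₀ + t) ^ lam / 2 * (a x * (u x t) ^ 2) ≤ energyDensity a u B K lam t₀ x t := by
  have h1 := rpow_le_expWeight (lam := lam) ht₀ hB ht
  have hapos : 0 < a x := lt_of_le_of_ne hax fun h => by rw [← h] at hKa; norm_num at hKa
  have hS : 0 ≤ ∑ i, (dx u i x t) ^ 2 := Finset.sum_nonneg fun i _ => sq_nonneg _
  have h2 : a x * (u x t) ^ 2 / 2 ≤ K * ((dt u x t) ^ 2 + ∑ i, (dx u i x t) ^ 2)
      + 2 * (u x t * dt u x t) + a x * (u x t) ^ 2 := by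
    have e1 : 0 ≤ a x / 2 * (u x t + 2 / a x * dt u x t) ^ 2 := by positivity
    have e2 : a x / 2 * (u x t + 2 / a x * dt u x t) ^ 2 = a x * (u x t) ^ 2 / 2
      + 2 * (u x t * dt u x t) + 2 / a x * (dt u x t) ^ 2 := by field_simp; ring
    have e3 : 2 / a x * (dt u x t) ^ 2 ≤ K * (dt u x t) ^ 2 := by
      refine mul_le_mul_of_nonneg_right ?_ (sq_nonneg _)
      rwa [div_le_iff₀ hapos]
    have e4 := mul_nonneg hK hS
    linarith
  calc (t₀ + t) ^ lam / 2 * (a x * (u x t) ^ 2)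
      = a x * (u x t) ^ 2 / 2 * (t₀ + t) ^ lam := by ring
    _ ≤ a x * (u x t) ^ 2 / 2 * expWeight B lam t₀ x t := by gcongr
    _ ≤ _ := mul_le_mul_of_nonneg_right h2 (expWeight_pos ht₀ ht).le

lemma integrableOn_energyDensity (hu : IsDampedWaveSolution 3 Ω a R₀ u) (hΩ : IsOpen Ω)
    (ha : ContinuousOn a (closure Ω)) (hB : Continuous B) (ht₀ : 0 < t₀) {t : ℝ} (ht : 0 ≤ t) :
    IntegrableOn (fun x => energyDensity a u B K lam t₀ x t) Ω :=
  integrableOn_of_eq_zero_of_lt_norm (ρ := R₀ + t) hΩ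
    ((continuousOn_energyDensity hu.contDiff hB ha ht₀).comp
      (f := fun x : EuclideanSpace ℝ (Fin N) => (x, t)) (by fun_prop) fun x hx => ⟨hx, ht⟩)
    fun x _ hx => hu.energyDensity_eq_zero_of_lt_norm ht hx

lemma integrableOn_mul_sq (hu : IsDampedWaveSolution 3 Ω a R₀ u) (hΩ : IsOpen Ω)
    (ha : ContinuousOn a (closure Ω)) {t : ℝ} (ht : 0 ≤ t) :
    IntegrableOn (fun x => a x * (u x t) ^ 2) Ω :=
  integrableOn_of_eq_zero_of_lt_norm (ρ := R₀ + t) hΩ (ha.mul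
    ((contDiff_slice hu.contDiff t).continuous.pow 2).continuousOn)
    fun x _ hx => by simp [hu.eq_zero_of_lt_norm ht hx]

end IsDampedWaveSolution

/-- Polynomial decay of `∫ a u²` with any rate `λ < (N + α) / (2 + α)`. -/
lemma exists_rpow_mul_setIntegral_le (hα : 0 < α) (hN : 0 < N) (hΩ : IsOpen Ω)
    (ha : ContinuousOn a (closure Ω)) (hapos : ∀ x ∈ closure Ω, 0 < a x) (ha₀ : 0 < a₀)
    (halim : Tendsto (fun x : EuclideanSpace ℝ (Fin N) => ‖x‖ ^ (-α) * a x)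
      (cocompact (EuclideanSpace ℝ (Fin N))) (nhds a₀))
    (hlam : 0 ≤ lam) (hlam' : lam < (N + α) / (2 + α)) (R₀ : ℝ) :
    ∃ C : ℝ, 0 < C ∧ ∀ u, IsDampedWaveSolution 3 Ω a R₀ u → ∀ t ≥ (0 : ℝ),
      (1 + t) ^ lam * ∫ x in Ω, a x * (u x t) ^ 2 ≤
        C * (sobNormSq 2 Ω (fun x => u x 0) + sobNormSq 1 Ω (fun x => deriv (u x) 0)) := by
  obtain ⟨B, K, t₀, hB, hK, ht1, hBK, hmono⟩ :=
    exists_setIntegral_energyDensity_le hα hN hΩ ha hapos ha₀ halim hlam hlam' R₀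
  have ht₀ : 0 < t₀ := by linarith
  obtain ⟨C, hC, hC0⟩ := IsDampedWaveSolution.exists_energyDensity_zero_le (lam := lam)
    (Ω := Ω) ha hB.continuous hK ht₀ R₀
  refine ⟨2 * C + 1, by positivity, fun u hu t ht => ?_⟩
  have h1 : (t₀ + t) ^ lam / 2 * ∫ x in Ω, a x * (u x t) ^ 2 ≤
      ∫ x in Ω, energyDensity a u B K lam t₀ x t := by
    rw [← integral_const_mul]
    refine setIntegral_mono_on ((hu.integrableOn_mul_sq hΩ ha ht).const_mul _)
      (hu.integrableOn_energyDensity hΩ ha hB.continuous ht₀ ht) hΩ.measurableSet fun x hx => ?_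
    obtain ⟨h1, h2⟩ := hBK x (subset_closure hx)
    exact IsDampedWaveSolution.le_energyDensity ht₀ h1 hK (hapos x (subset_closure hx)).le h2 ht
  have h2 : ∫ x in Ω, energyDensity a u B K lam t₀ x 0 ≤ C * ∫ x in Ω, initialDensity u x := by
    rw [← integral_const_mul]
    exact setIntegral_mono_on (hu.integrableOn_energyDensity hΩ ha hB.continuous ht₀ le_rfl)
      ((hu.integrableOn_initialDensity hΩ).const_mul _) hΩ.measurableSet (hC0 u hu)
  have h3 := hu.setIntegral_initialDensity_le hΩ
  have h4 : 0 ≤ ∫ x in Ω, initialDensity u x := integral_nonneg fun x => initialDensity_nonneg u x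
  have h5 : 0 ≤ ∫ x in Ω, a x * (u x t) ^ 2 := setIntegral_nonneg hΩ.measurableSet fun x hx =>
    mul_nonneg (hapos x (subset_closure hx)).le (sq_nonneg _)
  have h6 : (1 + t) ^ lam ≤ (t₀ + t) ^ lam :=
    Real.rpow_le_rpow (by linarith) (by linarith) hlam
  have h7 := hmono u hu t ht
  have h8 := mul_le_mul_of_nonneg_right h6 h5
  have h9 := mul_le_mul_of_nonneg_left h3 hC
  linarith

/-- Passage from decay of `∫ a u²` to the square root. -/
lemma sqrt_le_of_rpow_mul_le {I D C t s r : ℝ} (ht : 0 ≤ t) (hC : 0 ≤ C)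
    (h : (1 + t) ^ s * I ≤ C * D) (hr : -s / 2 ≤ r) :
    √I ≤ √C * (1 + t) ^ r * √D := by
  have h1 : 0 < 1 + t := by linarith
  have h2 : I ≤ C * ((1 + t) ^ (-s / 2)) ^ 2 * D := by
    have h3 : ((1 + t) ^ (-s / 2)) ^ 2 * (1 + t) ^ s = 1 := by
      rw [← Real.rpow_natCast, ← Real.rpow_mul h1.le, ← Real.rpow_add h1]
      norm_num
    calc I = ((1 + t) ^ (-s / 2)) ^ 2 * ((1 + t) ^ s * I) := by rw [← mul_assoc, h3, one_mul]
      _ ≤ ((1 + t) ^ (-s / 2)) ^ 2 * (C * D) := by gcongr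
      _ = _ := by ring
  calc √I ≤ √(C * ((1 + t) ^ (-s / 2)) ^ 2 * D) := Real.sqrt_le_sqrt h2
    _ = √C * (1 + t) ^ (-s / 2) * √D := by
      rw [Real.sqrt_mul (by positivity), Real.sqrt_mul hC, Real.sqrt_sq (by positivity)]
    _ ≤ √C * (1 + t) ^ r * √D := by
      gcongr
      linarith

end WeightedEnergyEstimate

section Hardy

variable {N : ℕ} {Ω : Set (EuclideanSpace ℝ (Fin N))} {s : ℝ}

/-- The vector field `-w² x / (s + |x|²)²`. -/
def hardyField (s : ℝ) (w : EuclideanSpace ℝ (Fin N) → ℝ) (i : Fin N)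
    (x : EuclideanSpace ℝ (Fin N)) : ℝ :=
  w x ^ 2 * (-x i / (s + ‖x‖ ^ 2) ^ 2)

lemma contDiff_hardyField (hs : 0 < s) {w : EuclideanSpace ℝ (Fin N) → ℝ} (hw : ContDiff ℝ 1 w)
    (i : Fin N) : ContDiff ℝ 1 (hardyField s w i) :=
  (hw.pow 2).mul ((EuclideanSpace.proj i : EuclideanSpace ℝ (Fin N) →L[ℝ] ℝ).contDiff.neg.div
    ((contDiff_const.add (contDiff_norm_sq ℝ)).pow 2) fun x => by positivity)

lemma fderiv_hardyField_single (hs : 0 < s) {w : EuclideanSpace ℝ (Fin N) → ℝ}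
    (hw : ContDiff ℝ 1 w) (i : Fin N) (x : EuclideanSpace ℝ (Fin N)) :
    fderiv ℝ (hardyField s w i) x (EuclideanSpace.single i 1) =
      -2 * w x * (fderiv ℝ w x (EuclideanSpace.single i 1) * x i) / (s + ‖x‖ ^ 2) ^ 2
        + w x ^ 2 * (-1 / (s + ‖x‖ ^ 2) ^ 2 + 4 * x i ^ 2 / (s + ‖x‖ ^ 2) ^ 3) := by
  have h1 := hasDerivAt_comp_add_smul (hw.differentiable (by simp) x) (EuclideanSpace.single i 1)
  have h2 : HasDerivAt (fun r : ℝ => (x + r • EuclideanSpace.single i (1 : ℝ)) i) 1 0 := by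
    simpa using (hasDerivAt_id (0 : ℝ)).const_add (x i)
  have h3 : HasDerivAt (fun r : ℝ => s + ‖x + r • EuclideanSpace.single i (1 : ℝ)‖ ^ 2)
      (2 * x i) 0 := by
    refine ((hasDerivAt_one_add_norm_sq_line x i).add_const (s - 1)).congr_of_eventuallyEq ?_
    exact Eventually.of_forall fun r => by ring
  have hρ : s + ‖x‖ ^ 2 ≠ 0 := by positivity
  refine fderiv_single_eq_of_hasDerivAt
    ((contDiff_hardyField hs hw i).differentiable (by simp) x) ?_
  refine ((h1.pow 2).mul (h2.neg.div (h3.pow 2) (by simpa using hρ))).congr_deriv ?_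
  simp
  field_simp
  ring

lemma sum_fderiv_hardyField (hs : 0 < s) {w : EuclideanSpace ℝ (Fin N) → ℝ}
    (hw : ContDiff ℝ 1 w) (x : EuclideanSpace ℝ (Fin N)) :
    ∑ i, fderiv ℝ (hardyField s w i) x (EuclideanSpace.single i 1) =
      -2 * w x * (∑ i, fderiv ℝ w x (EuclideanSpace.single i 1) * x i) / (s + ‖x‖ ^ 2) ^ 2
        + w x ^ 2 * (-N / (s + ‖x‖ ^ 2) ^ 2 + 4 * ‖x‖ ^ 2 / (s + ‖x‖ ^ 2) ^ 3) := by
  rw [Finset.sum_congr rfl fun i _ => fderiv_hardyField_single hs hw i x, ← sum_sq_eq_norm_sq x,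
    Finset.sum_add_distrib, ← Finset.sum_div, ← Finset.mul_sum, ← Finset.mul_sum,
    Finset.sum_add_distrib, ← Finset.sum_div, ← Finset.sum_div, ← Finset.mul_sum]
  simp

lemma sub_le_sum_fderiv_hardyField (hN : N = 2) (hs : 0 < s)
    {w : EuclideanSpace ℝ (Fin N) → ℝ} (hw : ContDiff ℝ 1 w) {x : EuclideanSpace ℝ (Fin N)}
    (hx : 2 * s ≤ ‖x‖ ^ 2) :
    w x ^ 2 / (s + ‖x‖ ^ 2) ^ 2 / 3
        - 3 / s * ∑ i, (fderiv ℝ w x (EuclideanSpace.single i 1)) ^ 2 ≤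
      ∑ i, fderiv ℝ (hardyField s w i) x (EuclideanSpace.single i 1) := by
  have hN' : (N : ℝ) = 2 := by exact_mod_cast hN
  rw [sum_fderiv_hardyField hs hw, hN']
  have hcs := Finset.sum_mul_sq_le_sq_mul_sq Finset.univ
    (fun i => fderiv ℝ w x (EuclideanSpace.single i 1)) (fun i => x i)
  rw [sum_sq_eq_norm_sq] at hcs
  have hS : 0 ≤ ∑ i, (fderiv ℝ w x (EuclideanSpace.single i 1)) ^ 2 :=
    Finset.sum_nonneg fun i _ => sq_nonneg _
  generalize ∑ i, fderiv ℝ w x (EuclideanSpace.single i 1) * x i = q at *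
  generalize ∑ i, (fderiv ℝ w x (EuclideanSpace.single i 1)) ^ 2 = S at *
  generalize w x = y at *
  have hy2 : 0 ≤ ‖x‖ ^ 2 := sq_nonneg _
  generalize ‖x‖ ^ 2 = z at *
  obtain ⟨ρ, hρ⟩ : ∃ ρ, ρ = s + z := ⟨_, rfl⟩
  rw [← hρ]
  have hρ0 : 0 < ρ := by linarith
  have e1 : 2 * y * q / ρ ^ 2 ≤ y ^ 2 / ρ ^ 2 / 3 + 3 / s * S := by
    refine le_add_of_sq_le (by positivity) (by positivity) ?_
    have h1 : 4 * (y ^ 2 / ρ ^ 2 / 3 * (3 / s * S)) = 4 * y ^ 2 * (ρ ^ 2 / s * S) / ρ ^ 4 := by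
      field_simp
    have h2 : (2 * y * q / ρ ^ 2) ^ 2 = 4 * y ^ 2 * q ^ 2 / ρ ^ 4 := by ring
    rw [h1, h2]
    have h3 : q ^ 2 ≤ ρ ^ 2 / s * S := by
      refine hcs.trans ?_
      rw [mul_comm S]
      gcongr
      rw [le_div_iff₀ hs, hρ]
      nlinarith
    gcongr
  have e2 : y ^ 2 * (2 / 3 / ρ ^ 2) ≤ y ^ 2 * (-2 / ρ ^ 2 + 4 * z / ρ ^ 3) := by
    refine mul_le_mul_of_nonneg_left ?_ (sq_nonneg y)
    have h1 : -2 / ρ ^ 2 + 4 * z / ρ ^ 3 - 2 / 3 / ρ ^ 2 = 4 * (z - 2 * s) / (3 * ρ ^ 3) := by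
      rw [show z = ρ - s by linarith]
      field_simp
      ring
    have h2 : 0 ≤ 4 * (z - 2 * s) / (3 * ρ ^ 3) :=
      div_nonneg (by linarith) (by positivity)
    linarith
  have e3 : y ^ 2 * (2 / 3 / ρ ^ 2) = 2 * (y ^ 2 / ρ ^ 2 / 3) := by ring
  have e4 : -2 * y * q / ρ ^ 2 = -(2 * y * q / ρ ^ 2) := by ring
  linarith

/-- A Hardy inequality on planar domains away from the origin. -/
lemma setIntegral_sq_div_le (hN : N = 2) (hΩ : IsOpen Ω) (hs : 0 < s)
    (hΩs : ∀ x ∈ Ω, 2 * s ≤ ‖x‖ ^ 2) {w : EuclideanSpace ℝ (Fin N) → ℝ} (hw : ContDiff ℝ 1 w)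
    {ρ : ℝ} (hc : ∀ x, ρ < ‖x‖ → w x = 0) (hb : ∀ x ∈ frontier Ω, w x = 0) :
    ∫ x in Ω, w x ^ 2 / (s + ‖x‖ ^ 2) ^ 2 ≤
      9 / s * ∫ x in Ω, ∑ i, (fderiv ℝ w x (EuclideanSpace.single i 1)) ^ 2 := by
  have hcs : HasCompactSupport w :=
    HasCompactSupport.intro (isCompact_closedBall 0 ρ) fun x hx =>
      hc x (by simpa using hx)
  have hcont : Continuous (fun x => ∑ i, (fderiv ℝ w x (EuclideanSpace.single i 1)) ^ 2) :=
    continuous_finsetSum _ fun i _ =>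
      ((hw.continuous_fderiv (by simp)).clm_apply continuous_const).pow 2
  have hf0 : ∀ x, ρ < ‖x‖ → fderiv ℝ w x = 0 := fun x hx => by
    have h2 : w =ᶠ[nhds x] fun _ => 0 := by
      filter_upwards [continuous_norm.continuousAt.eventually_mem (lt_mem_nhds hx)] with y hy
      exact hc y hy
    simp [h2.fderiv_eq]
  have hi1 : IntegrableOn (fun x => w x ^ 2 / (s + ‖x‖ ^ 2) ^ 2) Ω :=
    integrableOn_of_eq_zero_of_lt_norm (ρ := ρ) hΩ
      (((hw.continuous.pow 2).div ((continuous_const.add (continuous_norm.pow 2)).pow 2)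
        fun x => (by positivity : (s + ‖x‖ ^ 2) ^ 2 ≠ 0)).continuousOn)
      fun x _ hx => by simp [hc x hx]
  have hi2 : IntegrableOn (fun x => ∑ i, (fderiv ℝ w x (EuclideanSpace.single i 1)) ^ 2) Ω :=
    integrableOn_of_eq_zero_of_lt_norm (ρ := ρ) hΩ hcont.continuousOn
      fun x _ hx => by simp [hf0 x hx]
  have hsup : ∀ i, HasCompactSupport (hardyField s w i) := fun i =>
    HasCompactSupport.intro (isCompact_closedBall 0 ρ) fun x hx => by
      simp [hardyField, hc x (by simpa using hx)]
  have hi3 : ∀ i, IntegrableOn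
      (fun x => fderiv ℝ (hardyField s w i) x (EuclideanSpace.single i 1)) Ω := fun i =>
    ((((contDiff_hardyField hs hw i).continuous_fderiv (by simp)).clm_apply
      continuous_const).integrable_of_hasCompactSupport
        ((hsup i).fderiv_apply ℝ _)).integrableOn
  have hzero : ∫ x in Ω, ∑ i, fderiv ℝ (hardyField s w i) x (EuclideanSpace.single i 1) = 0 := by
    rw [integral_finsetSum _ fun i _ => hi3 i]
    refine Finset.sum_eq_zero fun i _ => setIntegral_fderiv_eq_zero hΩ
      (contDiff_hardyField hs hw i) (hsup i) (fun x hx => ?_) _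
    simp [hardyField, hb x hx]
  have hle := setIntegral_mono_on ((hi1.div_const 3).sub (hi2.const_mul (3 / s)))
    (integrable_finsetSum _ fun i _ => hi3 i) hΩ.measurableSet
    fun x hx => sub_le_sum_fderiv_hardyField hN hs hw (hΩs x hx)
  rw [hzero] at hle
  have hsub := integral_sub (hi1.div_const 3) (hi2.const_mul (3 / s))
  rw [integral_div, integral_const_mul] at hsub
  have h9 : 9 / s = 3 * (3 / s) := by ring
  rw [h9]
  have hle' := hsub.symm.trans_le hle
  linarith

end Hardy

section PrimitiveEnergy

variable {N : ℕ} {α : ℝ} {Ω : Set (EuclideanSpace ℝ (Fin N))} {a : EuclideanSpace ℝ (Fin N) → ℝ}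
  {a₀ R₀ : ℝ} {u : EuclideanSpace ℝ (Fin N) → ℝ → ℝ}

/-- The source `uₜ(0) + a u(0)` in the equation of the time primitive of `u`. -/
def primitiveSource (a : EuclideanSpace ℝ (Fin N) → ℝ) (u : EuclideanSpace ℝ (Fin N) → ℝ → ℝ)
    (x : EuclideanSpace ℝ (Fin N)) : ℝ :=
  dt u x 0 + a x * u x 0

/-- The energy density of the time primitive of `u`. -/
def primitiveDensity (a : EuclideanSpace ℝ (Fin N) → ℝ) (u : EuclideanSpace ℝ (Fin N) → ℝ → ℝ)
    (x : EuclideanSpace ℝ (Fin N)) (t : ℝ) : ℝ :=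
  u x t ^ 2 + ∑ i, (dx (timePrimitive u) i x t) ^ 2
    - 2 * primitiveSource a u x * timePrimitive u x t

/-- The time derivative of `primitiveDensity`. -/
def primitiveDensityDeriv (a : EuclideanSpace ℝ (Fin N) → ℝ)
    (u : EuclideanSpace ℝ (Fin N) → ℝ → ℝ) (x : EuclideanSpace ℝ (Fin N)) (t : ℝ) : ℝ :=
  2 * u x t * dt u x t + ∑ i, 2 * dx (timePrimitive u) i x t * dx u i x t
    - 2 * primitiveSource a u x * u x t

/-- The flux of `primitiveDensity`. -/
def primitiveFlux (u : EuclideanSpace ℝ (Fin N) → ℝ → ℝ) (i : Fin N)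
    (x : EuclideanSpace ℝ (Fin N)) (t : ℝ) : ℝ :=
  2 * u x t * dx (timePrimitive u) i x t

namespace IsDampedWaveSolution

lemma contDiff_timePrimitive (hu : IsDampedWaveSolution 3 Ω a R₀ u) :
    ContDiff ℝ 3 (Function.uncurry (timePrimitive u)) :=
  _root_.contDiff_timePrimitive (n := 3) hu.contDiff

lemma dt_timePrimitive (hu : IsDampedWaveSolution 3 Ω a R₀ u) : dt (timePrimitive u) = u :=
  _root_.dt_timePrimitive hu.contDiff.continuous

lemma timePrimitive_eq_zero_of_lt_norm (hu : IsDampedWaveSolution 3 Ω a R₀ u)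
    {x : EuclideanSpace ℝ (Fin N)} {t : ℝ} (ht : 0 ≤ t) (hx : R₀ + t < ‖x‖) :
    timePrimitive u x t = 0 := by
  refine intervalIntegral.integral_zero_ae (Eventually.of_forall fun s hs => ?_)
  rw [Set.uIoc_of_le ht] at hs
  exact hu.eq_zero_of_lt_norm hs.1.le (by linarith [hs.2])

lemma timePrimitive_eq_zero_of_mem_frontier (hu : IsDampedWaveSolution 3 Ω a R₀ u)
    {x : EuclideanSpace ℝ (Fin N)} (hx : x ∈ frontier Ω) {t : ℝ} (ht : 0 ≤ t) :
    timePrimitive u x t = 0 := by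
  refine intervalIntegral.integral_zero_ae (Eventually.of_forall fun s hs => ?_)
  rw [Set.uIoc_of_le ht] at hs
  exact hu.eq_zero_of_mem_frontier hx hs.1

lemma dx_timePrimitive_eq_zero_of_lt_norm (hu : IsDampedWaveSolution 3 Ω a R₀ u) (i : Fin N)
    {x : EuclideanSpace ℝ (Fin N)} {t : ℝ} (ht : 0 ≤ t) (hx : R₀ + t < ‖x‖) :
    dx (timePrimitive u) i x t = 0 := by
  have : (fun y => timePrimitive u y t) =ᶠ[nhds x] fun _ => 0 := by
    filter_upwards [continuous_norm.continuousAt.eventually_mem (lt_mem_nhds hx)] with y hy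
    exact hu.timePrimitive_eq_zero_of_lt_norm ht hy
  simp [dx, this.fderiv_eq]

lemma dt_dx_timePrimitive (hu : IsDampedWaveSolution 3 Ω a R₀ u) (i : Fin N) :
    dt (dx (timePrimitive u) i) = dx u i := by
  ext x t
  rw [dt_dx_comm (hu.contDiff_timePrimitive.of_le (by norm_num)), hu.dt_timePrimitive]

lemma sum_dx_dx_timePrimitive (hu : IsDampedWaveSolution 3 Ω a R₀ u)
    {x : EuclideanSpace ℝ (Fin N)} (hx : x ∈ Ω) {t : ℝ} (ht : 0 < t) :
    ∑ i, dx (dx (timePrimitive u) i) i x t =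
      dt u x t + a x * u x t - primitiveSource a u x := by
  have hv := hu.contDiff_timePrimitive
  have h2 : ∀ i, ContDiff ℝ 1 (Function.uncurry (dx (dx (timePrimitive u) i) i)) := fun i =>
    contDiff_dx (m := 1) (contDiff_dx (m := 2) hv (by norm_num) i) (by norm_num) i
  have hd1 : ∀ s, HasDerivAt (fun s => ∑ i, dx (dx (timePrimitive u) i) i x s)
      (∑ i, dx (dx u i) i x s) s := fun s =>
    HasDerivAt.fun_sum fun i _ => by
      have := hasDerivAt_dt (h2 i) x s
      rwa [dt_dx_comm (contDiff_dx (m := 2) hv (by norm_num) i), hu.dt_dx_timePrimitive] at this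
  have hd2 : ∀ s, HasDerivAt (fun s => ∑ i, dx (dx (timePrimitive u) i) i x s
      - (dt u x s + a x * u x s)) (∑ i, dx (dx u i) i x s - (dt (dt u) x s + a x * dt u x s)) s :=
    fun s => (hd1 s).sub
      ((hasDerivAt_dt (contDiff_dt (m := 1) hu.contDiff (by norm_num)) x s).add
        ((hasDerivAt_dt (hu.contDiff.of_le (by norm_num)) x s).const_mul (a x)))
  obtain ⟨s, hs, hslope⟩ := exists_hasDerivAt_eq_slope _ _ ht
    (fun s _ => (hd2 s).continuousAt.continuousWithinAt) (fun s _ => hd2 s)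
  rw [hu.dt_dt_eq hx hs.1, sub_add_cancel, sub_self, eq_comm, div_eq_zero_iff] at hslope
  have h0 : ∀ i, dx (dx (timePrimitive u) i) i x 0 = 0 := fun i => by
    simp [dx, timePrimitive]
  have h3 := hslope.resolve_right (by linarith)
  simp only [h0, Finset.sum_const_zero] at h3
  rw [primitiveSource]
  linarith

lemma hasDerivAt_primitiveDensity (hu : IsDampedWaveSolution 3 Ω a R₀ u)
    (x : EuclideanSpace ℝ (Fin N)) (t : ℝ) :
    HasDerivAt (primitiveDensity a u x) (primitiveDensityDeriv a u x t) t := by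
  have h0 := hasDerivAt_dt (hu.contDiff.of_le (by norm_num)) x t
  have h1 := hasDerivAt_dt (hu.contDiff_timePrimitive.of_le (by norm_num)) x t
  rw [hu.dt_timePrimitive] at h1
  have h3 : HasDerivAt (fun t => ∑ i, (dx (timePrimitive u) i x t) ^ 2)
      (∑ i, 2 * dx (timePrimitive u) i x t * dx u i x t) t := by
    refine HasDerivAt.fun_sum fun i _ => ?_
    have h2 := hasDerivAt_dt
      (contDiff_dx (m := 1) hu.contDiff_timePrimitive (by norm_num) i) x t
    rw [hu.dt_dx_timePrimitive] at h2
    exact (h2.pow 2).congr_deriv (by simp)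
  refine (((h0.pow 2).add h3).sub (h1.const_mul (2 * primitiveSource a u x))).congr_deriv ?_
  simp [primitiveDensityDeriv]

lemma continuousOn_primitiveSource (hu : IsDampedWaveSolution 3 Ω a R₀ u)
    (ha : ContinuousOn a (closure Ω)) : ContinuousOn (primitiveSource a u) (closure Ω) :=
  (contDiff_slice (contDiff_dt (m := 2) hu.contDiff (by norm_num)) 0).continuous.continuousOn.add
    (ha.mul (contDiff_slice hu.contDiff 0).continuous.continuousOn)

lemma continuousOn_primitiveDensity (hu : IsDampedWaveSolution 3 Ω a R₀ u)
    (ha : ContinuousOn a (closure Ω)) :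
    ContinuousOn (Function.uncurry (primitiveDensity a u)) (closure Ω ×ˢ Set.Ici 0) := by
  have hf : ContinuousOn (fun p : EuclideanSpace ℝ (Fin N) × ℝ => primitiveSource a u p.1)
      (closure Ω ×ˢ Set.Ici 0) :=
    (hu.continuousOn_primitiveSource ha).comp continuous_fst.continuousOn fun p hp => hp.1
  have h0 := hu.contDiff.continuous
  have h1 := hu.contDiff_timePrimitive.continuous
  have h2 := fun i => (contDiff_dx (m := 2) hu.contDiff_timePrimitive (by norm_num) i).continuous
  exact ((h0.pow 2).add (continuous_finsetSum _ fun i _ => (h2 i).pow 2)).continuousOn.sub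
    ((hf.const_mul 2).mul h1.continuousOn)

lemma continuousOn_primitiveDensityDeriv (hu : IsDampedWaveSolution 3 Ω a R₀ u)
    (ha : ContinuousOn a (closure Ω)) :
    ContinuousOn (Function.uncurry (primitiveDensityDeriv a u)) (closure Ω ×ˢ Set.Ici 0) := by
  have hf : ContinuousOn (fun p : EuclideanSpace ℝ (Fin N) × ℝ => primitiveSource a u p.1)
      (closure Ω ×ˢ Set.Ici 0) :=
    (hu.continuousOn_primitiveSource ha).comp continuous_fst.continuousOn fun p hp => hp.1
  have h0 := hu.contDiff.continuous
  have h1 := (contDiff_dt (m := 2) hu.contDiff (by norm_num)).continuous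
  have h2 := fun i => (contDiff_dx (m := 2) hu.contDiff_timePrimitive (by norm_num) i).continuous
  have h3 := fun i => (contDiff_dx (m := 2) hu.contDiff (by norm_num) i).continuous
  exact (((h0.const_mul 2).mul h1).add
    (continuous_finsetSum _ fun i _ => ((h2 i).const_mul 2).mul (h3 i))).continuousOn.sub
    ((hf.const_mul 2).mul h0.continuousOn)

lemma contDiff_primitiveFlux (hu : IsDampedWaveSolution 3 Ω a R₀ u) (i : Fin N) (t : ℝ) :
    ContDiff ℝ 1 (fun x => primitiveFlux u i x t) :=
  (contDiff_const.mul (contDiff_slice (hu.contDiff.of_le (by norm_num)) t)).mul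
    (contDiff_slice (contDiff_dx (m := 1) hu.contDiff_timePrimitive (by norm_num) i) t)

lemma dx_primitiveFlux (hu : IsDampedWaveSolution 3 Ω a R₀ u) (i : Fin N)
    (x : EuclideanSpace ℝ (Fin N)) (t : ℝ) :
    dx (primitiveFlux u i) i x t = 2 * dx (timePrimitive u) i x t * dx u i x t
      + 2 * u x t * dx (dx (timePrimitive u) i) i x t := by
  have h0 := hasDerivAt_dx (hu.contDiff.of_le (by norm_num)) i x t
  have h2 := hasDerivAt_dx
    (contDiff_dx (m := 1) hu.contDiff_timePrimitive (by norm_num) i) i x t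
  refine fderiv_single_eq_of_hasDerivAt
    ((hu.contDiff_primitiveFlux i t).differentiable (by simp) x) ?_
  refine ((h0.const_mul 2).mul h2).congr_deriv ?_
  simp
  ring

lemma primitiveDensityDeriv_sub_sum_dx_primitiveFlux (hu : IsDampedWaveSolution 3 Ω a R₀ u)
    {x : EuclideanSpace ℝ (Fin N)} (hx : x ∈ Ω) {t : ℝ} (ht : 0 < t) :
    primitiveDensityDeriv a u x t - ∑ i, dx (primitiveFlux u i) i x t =
      -2 * (a x * u x t ^ 2) := by
  simp only [hu.dx_primitiveFlux, Finset.sum_add_distrib, ← Finset.mul_sum,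
    hu.sum_dx_dx_timePrimitive hx ht, primitiveDensityDeriv]
  ring

lemma primitiveSource_eq_zero_of_lt_norm (hu : IsDampedWaveSolution 3 Ω a R₀ u)
    {x : EuclideanSpace ℝ (Fin N)} (hx : R₀ < ‖x‖) : primitiveSource a u x = 0 := by
  simp [primitiveSource, hu.eq_zero_of_lt_norm le_rfl (by simpa using hx : R₀ + 0 < ‖x‖),
    hu.dt_eq_zero_of_lt_norm le_rfl (by simpa using hx : R₀ + 0 < ‖x‖)]

lemma primitiveDensity_eq_zero_of_lt_norm (hu : IsDampedWaveSolution 3 Ω a R₀ u)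
    {x : EuclideanSpace ℝ (Fin N)} {t : ℝ} (ht : 0 ≤ t) (hx : R₀ + t < ‖x‖) :
    primitiveDensity a u x t = 0 := by
  simp [primitiveDensity, hu.eq_zero_of_lt_norm ht hx,
    hu.timePrimitive_eq_zero_of_lt_norm ht hx, hu.dx_timePrimitive_eq_zero_of_lt_norm _ ht hx]

lemma integrableOn_primitiveDensity (hu : IsDampedWaveSolution 3 Ω a R₀ u) (hΩ : IsOpen Ω)
    (ha : ContinuousOn a (closure Ω)) {t : ℝ} (ht : 0 ≤ t) :
    IntegrableOn (fun x => primitiveDensity a u x t) Ω :=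
  integrableOn_of_eq_zero_of_lt_norm (ρ := R₀ + t) hΩ
    ((hu.continuousOn_primitiveDensity ha).comp
      (f := fun x : EuclideanSpace ℝ (Fin N) => (x, t)) (by fun_prop) fun x hx => ⟨hx, ht⟩)
    fun x _ hx => hu.primitiveDensity_eq_zero_of_lt_norm ht hx

lemma primitiveDensity_zero (x : EuclideanSpace ℝ (Fin N)) :
    primitiveDensity a u x 0 = u x 0 ^ 2 := by
  simp [primitiveDensity, timePrimitive, dx]

/-- Lower bound for the energy of the time primitive, by the planar Hardy inequality. -/
lemma exists_neg_le_setIntegral_primitiveDensity (hN : N = 2) (hΩ : IsOpen Ω)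
    (h0 : (0 : EuclideanSpace ℝ (Fin N)) ∉ closure Ω) (ha : ContinuousOn a (closure Ω)) (R₀ : ℝ) :
    ∃ C : ℝ, 0 ≤ C ∧ ∀ u, IsDampedWaveSolution 3 Ω a R₀ u → ∀ t ≥ (0 : ℝ),
      -(C * ∫ x in Ω, initialDensity u x) ≤ ∫ x in Ω, primitiveDensity a u x t := by
  obtain ⟨r, hr, hball⟩ := Metric.isOpen_iff.1 isClosed_closure.isOpen_compl 0 h0
  have hΩr : ∀ x ∈ Ω, 2 * (r ^ 2 / 2) ≤ ‖x‖ ^ 2 := fun x hx => by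
    have : r ≤ ‖x‖ := by
      by_contra! h
      exact hball (mem_ball_zero_iff.2 h) (subset_closure hx)
    nlinarith
  obtain ⟨s, hs, hΩs⟩ : ∃ s : ℝ, 0 < s ∧ ∀ x ∈ Ω, 2 * s ≤ ‖x‖ ^ 2 :=
    ⟨r ^ 2 / 2, by positivity, hΩr⟩
  obtain ⟨A, hA0, hA⟩ := exists_bound_on_closedBall ha R₀
  refine ⟨9 / s * ((s + R₀ ^ 2) ^ 2 * (2 + 2 * A ^ 2)), by positivity, fun u hu t ht => ?_⟩
  have hw : ContDiff ℝ 1 (fun x => timePrimitive u x t) :=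
    contDiff_slice (hu.contDiff_timePrimitive.of_le (by norm_num)) t
  have hardy : ∫ x in Ω, timePrimitive u x t ^ 2 / (s + ‖x‖ ^ 2) ^ 2 ≤
      9 / s * ∫ x in Ω, ∑ i, (dx (timePrimitive u) i x t) ^ 2 :=
    setIntegral_sq_div_le hN hΩ hs hΩs hw (ρ := R₀ + t)
    (fun x hx => hu.timePrimitive_eq_zero_of_lt_norm ht hx)
    (fun x hx => hu.timePrimitive_eq_zero_of_mem_frontier hx ht)
  have hi1 : IntegrableOn (fun x => timePrimitive u x t ^ 2 / (s + ‖x‖ ^ 2) ^ 2) Ω :=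
    integrableOn_of_eq_zero_of_lt_norm (ρ := R₀ + t) hΩ
      (((hw.continuous.pow 2).div ((continuous_const.add (continuous_norm.pow 2)).pow 2)
        fun x => (by positivity : (s + ‖x‖ ^ 2) ^ 2 ≠ 0)).continuousOn)
      fun x _ hx => by simp [hu.timePrimitive_eq_zero_of_lt_norm ht hx]
  have hi2 : IntegrableOn (fun x => ∑ i, (dx (timePrimitive u) i x t) ^ 2) Ω :=
    integrableOn_of_eq_zero_of_lt_norm (ρ := R₀ + t) hΩ
      (continuous_finsetSum _ fun i _ => (contDiff_slice (contDiff_dx (m := 2)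
        hu.contDiff_timePrimitive (by norm_num) i) t).continuous.pow 2).continuousOn
      fun x _ hx => by simp [hu.dx_timePrimitive_eq_zero_of_lt_norm _ ht hx]
  have hi3 := hu.integrableOn_initialDensity hΩ
  have hsource : ∀ x ∈ Ω, (s + ‖x‖ ^ 2) ^ 2 * primitiveSource a u x ^ 2 ≤
      (s + R₀ ^ 2) ^ 2 * (2 + 2 * A ^ 2) * initialDensity u x := by
    intro x hx
    rcases lt_or_ge R₀ ‖x‖ with h | h
    · rw [hu.primitiveSource_eq_zero_of_lt_norm h]
      simpa using mul_nonneg (by positivity) (initialDensity_nonneg u x)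
    · have h1 : primitiveSource a u x ^ 2 ≤ (2 + 2 * A ^ 2) * initialDensity u x := by
        have h2 : a x ^ 2 ≤ A ^ 2 := sq_le_sq' (abs_le.1 (hA x (subset_closure hx) h)).1
          (abs_le.1 (hA x (subset_closure hx) h)).2
        have h3 := mul_le_mul_of_nonneg_right h2 (sq_nonneg (u x 0))
        rw [primitiveSource, initialDensity]
        have e1 : 0 ≤ (2 + 2 * A ^ 2) * ‖fderiv ℝ (fun y => u y 0) x‖ ^ 2 := by positivity
        have e2 : 0 ≤ A ^ 2 * (dt u x 0) ^ 2 := by positivity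
        nlinarith [sq_nonneg (dt u x 0 - a x * u x 0), sq_nonneg (u x 0)]
      rw [mul_assoc]
      gcongr
  have hpt : ∀ x ∈ Ω, ∑ i, (dx (timePrimitive u) i x t) ^ 2
      - s / 9 * (timePrimitive u x t ^ 2 / (s + ‖x‖ ^ 2) ^ 2)
      - 9 / s * ((s + R₀ ^ 2) ^ 2 * (2 + 2 * A ^ 2)) * initialDensity u x ≤
      primitiveDensity a u x t := by
    intro x hx
    have e1 : 2 * primitiveSource a u x * timePrimitive u x t ≤
        s / 9 * (timePrimitive u x t ^ 2 / (s + ‖x‖ ^ 2) ^ 2)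
          + 9 / s * ((s + ‖x‖ ^ 2) ^ 2 * primitiveSource a u x ^ 2) := by
      refine le_add_of_sq_le (by positivity) (by positivity) (le_of_eq ?_)
      have : s + ‖x‖ ^ 2 ≠ 0 := by positivity
      field_simp
      ring
    have e2 := mul_le_mul_of_nonneg_left (hsource x hx) (by positivity : 0 ≤ 9 / s)
    have e3 := sq_nonneg (u x t)
    rw [primitiveDensity]
    linarith
  have hle := setIntegral_mono_on ((hi2.sub (hi1.const_mul (s / 9))).sub (hi3.const_mul _))
    (hu.integrableOn_primitiveDensity hΩ ha ht) hΩ.measurableSet hpt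
  have hsub : ∫ x in Ω, (∑ i, (dx (timePrimitive u) i x t) ^ 2
      - s / 9 * (timePrimitive u x t ^ 2 / (s + ‖x‖ ^ 2) ^ 2)
      - 9 / s * ((s + R₀ ^ 2) ^ 2 * (2 + 2 * A ^ 2)) * initialDensity u x) =
      (∫ x in Ω, ∑ i, (dx (timePrimitive u) i x t) ^ 2)
      - s / 9 * (∫ x in Ω, timePrimitive u x t ^ 2 / (s + ‖x‖ ^ 2) ^ 2)
      - 9 / s * ((s + R₀ ^ 2) ^ 2 * (2 + 2 * A ^ 2)) * ∫ x in Ω, initialDensity u x := by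
    have h12 : IntegrableOn (fun x => ∑ i, (dx (timePrimitive u) i x t) ^ 2
      - s / 9 * (timePrimitive u x t ^ 2 / (s + ‖x‖ ^ 2) ^ 2)) Ω := hi2.sub (hi1.const_mul (s / 9))
    rw [integral_sub h12 (hi3.const_mul _), integral_sub hi2 (hi1.const_mul _),
      integral_const_mul, integral_const_mul]
  have hle' := hsub.symm.trans_le hle
  have hardy' := mul_le_mul_of_nonneg_left hardy (by positivity : 0 ≤ s / 9)
  rw [← mul_assoc, show s / 9 * (9 / s) = 1 by field_simp, one_mul] at hardy'
  linarith

end IsDampedWaveSolution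

end PrimitiveEnergy

section PlanarDecay

variable {N : ℕ} {α : ℝ} {Ω : Set (EuclideanSpace ℝ (Fin N))} {a : EuclideanSpace ℝ (Fin N) → ℝ}
  {a₀ R₀ : ℝ} {u : EuclideanSpace ℝ (Fin N) → ℝ → ℝ} {K t₀ : ℝ}

namespace IsDampedWaveSolution

lemma deriv_add_le_sum_dx_flux (hu : IsDampedWaveSolution 3 Ω a R₀ u) (hK : 0 ≤ K)
    (ht₀ : 0 < t₀) (hKt : K ≤ t₀) {x : EuclideanSpace ℝ (Fin N)} (hx : x ∈ Ω)
    (hKa : 3 ≤ K * a x) (hta : 1 ≤ t₀ * a x) {t : ℝ} (ht : 0 < t) :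
    energyDensityDeriv a u (fun _ => 0) K 1 t₀ x t + primitiveDensityDeriv a u x t ≤
      ∑ i, dx (fun y s => energyFlux u (fun _ => 0) K 1 t₀ i y s
        + primitiveFlux u i y s) i x t := by
  have hsum : ∀ i, dx (fun y s => energyFlux u (fun _ => 0) K 1 t₀ i y s
      + primitiveFlux u i y s) i x t =
      dx (energyFlux u (fun _ => 0) K 1 t₀ i) i x t + dx (primitiveFlux u i) i x t := fun i => by
    simp only [dx]
    rw [fderiv_fun_add ((contDiff_energyFlux hu.contDiff contDiff_const i t).differentiable
      (by simp) x) ((hu.contDiff_primitiveFlux i t).differentiable (by simp) x)]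
    rfl
  simp only [hsum, Finset.sum_add_distrib]
  have h1 := energyDensityDeriv_sub_sum_dx_energyFlux (K := K) (lam := 1) hu
    (contDiff_const (c := (0 : ℝ))) ht₀ hx ht
  have h2 := hu.primitiveDensityDeriv_sub_sum_dx_primitiveFlux hx ht
  have hT : 0 < t₀ + t := by linarith
  have hap : 0 < a x := by
    by_contra! h
    nlinarith
  have hS : 0 ≤ ∑ i, (dx u i x t) ^ 2 := Finset.sum_nonneg fun i _ => sq_nonneg _
  have h3 : 2 * (u x t * dt u x t) ≤ a x * u x t ^ 2 + (t₀ + t) * dt u x t ^ 2 := by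
    refine le_add_of_sq_le (by positivity) (by positivity) ?_
    have : 1 ≤ (t₀ + t) * a x := hta.trans (by gcongr; linarith)
    nlinarith [mul_le_mul_of_nonneg_right this (sq_nonneg (u x t * dt u x t))]
  have h4 : (t₀ + t + K) * dt u x t ^ 2 ≤ (t₀ + t) * (2 * (K * a x) - 2) * dt u x t ^ 2 := by
    refine mul_le_mul_of_nonneg_right ?_ (sq_nonneg _)
    nlinarith [mul_nonneg hT.le (sub_nonneg.2 hKa)]
  have h5 : K * ∑ i, (dx u i x t) ^ 2 ≤ 2 * (t₀ + t) * ∑ i, (dx u i x t) ^ 2 :=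
    mul_le_mul_of_nonneg_right (by linarith) hS
  have h6 : energyDensityDeriv a u (fun _ => 0) K 1 t₀ x t
      - ∑ i, dx (energyFlux u (fun _ => 0) K 1 t₀ i) i x t =
      (t₀ + t) * (-2 * K * a x * dt u x t ^ 2 + 2 * dt u x t ^ 2 - 2 * ∑ i, (dx u i x t) ^ 2)
      + (K * (dt u x t ^ 2 + ∑ i, (dx u i x t) ^ 2) + 2 * (u x t * dt u x t)
        + a x * u x t ^ 2) := by
    rw [h1]
    simp [energyProduction, expWeight, lap]
    field_simp
  linarith

lemma setIntegral_energyDensity_add_le (hu : IsDampedWaveSolution 3 Ω a R₀ u) (hΩ : IsOpen Ω)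
    (ha : ContinuousOn a (closure Ω)) (hK : 0 ≤ K) (ht₀ : 0 < t₀) (hKt : K ≤ t₀)
    (hKa : ∀ x ∈ Ω, 3 ≤ K * a x) (hta : ∀ x ∈ Ω, 1 ≤ t₀ * a x) {t : ℝ} (ht : 0 ≤ t) :
    (∫ x in Ω, energyDensity a u (fun _ => 0) K 1 t₀ x t) + ∫ x in Ω, primitiveDensity a u x t ≤
      (∫ x in Ω, energyDensity a u (fun _ => 0) K 1 t₀ x 0) + ∫ x in Ω, u x 0 ^ 2 := by
  have hB : ContDiff ℝ 2 (fun _ : EuclideanSpace ℝ (Fin N) => (0 : ℝ)) := contDiff_const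
  have hmono := setIntegral_le_of_deriv_le_div hΩ (R₀ := R₀)
    (e := fun x t => energyDensity a u (fun _ => 0) K 1 t₀ x t + primitiveDensity a u x t)
    (e' := fun x t => energyDensityDeriv a u (fun _ => 0) K 1 t₀ x t
      + primitiveDensityDeriv a u x t)
    (F := fun i y s => energyFlux u (fun _ => 0) K 1 t₀ i y s + primitiveFlux u i y s)
    ((continuousOn_energyDensity hu.contDiff hB.continuous ha ht₀).add
      (hu.continuousOn_primitiveDensity ha))
    ((continuousOn_energyDensityDeriv hu.contDiff hB.continuous ha ht₀).add
      (hu.continuousOn_primitiveDensityDeriv ha))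
    (fun x _ t ht => (hasDerivAt_energyDensity hu.contDiff ht₀ x ht.le).add
      (hu.hasDerivAt_primitiveDensity x t))
    (fun x _ t ht hx => by
      simp [hu.energyDensity_eq_zero_of_lt_norm ht hx,
        hu.primitiveDensity_eq_zero_of_lt_norm ht hx])
    (fun i t _ => (contDiff_energyFlux hu.contDiff hB i t).add (hu.contDiff_primitiveFlux i t))
    (fun i t ht x hx => by
      simp [hu.energyFlux_eq_zero_of_lt_norm i ht.le hx, primitiveFlux,
        hu.eq_zero_of_lt_norm ht.le hx])
    (fun i t ht x hx => by
      simp [hu.energyFlux_eq_zero_of_mem_frontier i hx ht, primitiveFlux,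
        hu.eq_zero_of_mem_frontier hx ht])
    (fun x hx t ht => hu.deriv_add_le_sum_dx_flux hK ht₀ hKt hx (hKa x hx) (hta x hx) ht) t ht
  have hE := fun {t : ℝ} (ht : 0 ≤ t) =>
    hu.integrableOn_energyDensity (K := K) (lam := 1) hΩ ha hB.continuous ht₀ ht
  rw [integral_add (hE ht) (hu.integrableOn_primitiveDensity hΩ ha ht),
    integral_add (hE le_rfl) (hu.integrableOn_primitiveDensity hΩ ha le_rfl)] at hmono
  simpa only [primitiveDensity_zero] using hmono

end IsDampedWaveSolution

/-- In the plane, `∫ a u²` decays like `1 / (1 + t)`. -/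
lemma exists_one_add_mul_setIntegral_le (hα : 0 < α) (hN : N = 2) (hΩ : IsOpen Ω)
    (h0 : (0 : EuclideanSpace ℝ (Fin N)) ∉ closure Ω)
    (ha : ContinuousOn a (closure Ω)) (hapos : ∀ x ∈ closure Ω, 0 < a x) (ha₀ : 0 < a₀)
    (halim : Tendsto (fun x : EuclideanSpace ℝ (Fin N) => ‖x‖ ^ (-α) * a x)
      (cocompact (EuclideanSpace ℝ (Fin N))) (nhds a₀)) (R₀ : ℝ) :
    ∃ C : ℝ, 0 < C ∧ ∀ u, IsDampedWaveSolution 3 Ω a R₀ u → ∀ t ≥ (0 : ℝ),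
      (1 + t) ^ (1 : ℝ) * ∫ x in Ω, a x * (u x t) ^ 2 ≤
        C * (sobNormSq 2 Ω (fun x => u x 0) + sobNormSq 1 Ω (fun x => deriv (u x) 0)) := by
  obtain ⟨r, hr, hra⟩ := exists_pos_mul_rpow_le ha hapos ha₀ halim
  have hra' : ∀ x ∈ Ω, r ≤ a x := fun x hx => by
    have h1 : 1 ≤ (1 + ‖x‖ ^ 2) ^ (α / 2) :=
      Real.one_le_rpow (by nlinarith [sq_nonneg ‖x‖]) (by positivity)
    nlinarith [hra x (subset_closure hx)]
  set K : ℝ := 3 / r with hKdef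
  set t₀ : ℝ := 1 + 3 / r with ht₀def
  have hK : 0 ≤ K := by positivity
  have ht₀ : 0 < t₀ := by positivity
  have hKa : ∀ x ∈ Ω, 3 ≤ K * a x := fun x hx => by
    calc 3 = K * r := by rw [hKdef]; field_simp
      _ ≤ K * a x := mul_le_mul_of_nonneg_left (hra' x hx) hK
  have hta : ∀ x ∈ Ω, 1 ≤ t₀ * a x := fun x hx => by
    nlinarith [hKa x hx, hapos x (subset_closure hx)]
  obtain ⟨C₁, hC₁, hE0⟩ := IsDampedWaveSolution.exists_energyDensity_zero_le (lam := 1)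
    (B := fun _ => 0) (Ω := Ω) ha continuous_const hK ht₀ R₀
  obtain ⟨C₂, hC₂, hlow⟩ :=
    IsDampedWaveSolution.exists_neg_le_setIntegral_primitiveDensity hN hΩ h0 ha R₀
  refine ⟨2 * (C₁ + 1 + C₂), by positivity, fun u hu t ht => ?_⟩
  have hE := fun {t : ℝ} (ht : 0 ≤ t) => hu.integrableOn_energyDensity (K := K) (lam := 1)
    (B := fun _ => 0) hΩ ha continuous_const ht₀ ht
  have h1 : (t₀ + t) ^ (1 : ℝ) / 2 * ∫ x in Ω, a x * (u x t) ^ 2 ≤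
      ∫ x in Ω, energyDensity a u (fun _ => 0) K 1 t₀ x t := by
    rw [← integral_const_mul]
    exact setIntegral_mono_on ((hu.integrableOn_mul_sq hΩ ha ht).const_mul _) (hE ht)
      hΩ.measurableSet fun x hx => IsDampedWaveSolution.le_energyDensity ht₀ le_rfl hK
        (hapos x (subset_closure hx)).le (by linarith [hKa x hx]) ht
  have h2 : ∫ x in Ω, energyDensity a u (fun _ => 0) K 1 t₀ x 0 ≤
      C₁ * ∫ x in Ω, initialDensity u x := by
    rw [← integral_const_mul]
    exact setIntegral_mono_on (hE le_rfl) ((hu.integrableOn_initialDensity hΩ).const_mul _)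
      hΩ.measurableSet (hE0 u hu)
  have h3 : ∫ x in Ω, u x 0 ^ 2 ≤ ∫ x in Ω, initialDensity u x := by
    refine setIntegral_mono_on ?_ (hu.integrableOn_initialDensity hΩ) hΩ.measurableSet
      fun x _ => ?_
    · simpa only [IsDampedWaveSolution.primitiveDensity_zero] using
        hu.integrableOn_primitiveDensity hΩ ha (le_refl (0 : ℝ))
    · rw [initialDensity]
      nlinarith [sq_nonneg ‖fderiv ℝ (fun y => u y 0) x‖, sq_nonneg (dt u x 0)]
  have h4 := hu.setIntegral_energyDensity_add_le hΩ ha hK ht₀ (by linarith) hKa hta ht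
  have h5 := hlow u hu t ht
  have h6 : 0 ≤ ∫ x in Ω, a x * (u x t) ^ 2 := setIntegral_nonneg hΩ.measurableSet fun x hx =>
    mul_nonneg (hapos x (subset_closure hx)).le (sq_nonneg _)
  rw [Real.rpow_one] at h1 ⊢
  have h7 : (1 + t) * ∫ x in Ω, a x * (u x t) ^ 2 ≤
      (t₀ + t) * ∫ x in Ω, a x * (u x t) ^ 2 :=
    mul_le_mul_of_nonneg_right (by linarith) h6
  have h8 := mul_le_mul_of_nonneg_left (hu.setIntegral_initialDensity_le hΩ)
    (by positivity : 0 ≤ 2 * (C₁ + 1 + C₂))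
  linarith

end PlanarDecay

/-- Corollary 1.2 of the paper: for every `δ > 0` and `R₀ > 0` there is
`C > 0` such that every classical `C³` solution of the damped wave equation with finite
propagation from `B(0,R₀)` and finite `H²×H¹` data norm satisfies, for `t ≥ 0`,
`(∫_Ω a|u(·,t)|² dx)^{1/2} ≤ C (1+t)^{−(N+α)/(2(2+α))+δ} ‖(u(0),u_t(0))‖_{H²×H¹}`;
when `N = 2` the estimate also holds with `δ = 0`. -/
theorem stmt_18 (N : ℕ) (hN : 2 ≤ N) (α : ℝ) (hα : 0 < α)
    (Ω : Set (EuclideanSpace ℝ (Fin N))) (hΩopen : IsOpen Ω)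
    (hΩext : IsCompact Ωᶜ) (hΩbdry : HasSmoothBoundary Ω)
    (h0 : (0 : EuclideanSpace ℝ (Fin N)) ∉ closure Ω)
    (a : EuclideanSpace ℝ (Fin N) → ℝ) (ha : ContDiffOn ℝ 2 a (closure Ω))
    (hapos : ∀ x ∈ closure Ω, 0 < a x)
    (a₀ : ℝ) (ha₀ : 0 < a₀)
    (halim : Tendsto (fun x : EuclideanSpace ℝ (Fin N) => ‖x‖ ^ (-α) * a x)
      (cocompact (EuclideanSpace ℝ (Fin N))) (nhds a₀)) :
    (∀ δ > (0 : ℝ), ∀ R₀ > (0 : ℝ), ∃ C > (0 : ℝ),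
      ∀ u : EuclideanSpace ℝ (Fin N) → ℝ → ℝ,
        IsDampedWaveSolution 3 Ω a R₀ u →
        (∀ j ∈ Finset.range 3,
          IntegrableOn (fun x => ‖iteratedFDeriv ℝ j (fun y => u y 0) x‖ ^ 2) Ω) →
        (∀ j ∈ Finset.range 2,
          IntegrableOn (fun x => ‖iteratedFDeriv ℝ j (fun y => deriv (u y) 0) x‖ ^ 2) Ω) →
        ∀ t ≥ (0 : ℝ),
          Real.sqrt (∫ x in Ω, a x * (u x t) ^ 2)
            ≤ C * (1 + t) ^ (-(((N : ℝ) + α) / (2 * (2 + α))) + δ)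
              * Real.sqrt (sobNormSq 2 Ω (fun x => u x 0)
                  + sobNormSq 1 Ω (fun x => deriv (u x) 0)))
    ∧ (N = 2 → ∀ R₀ > (0 : ℝ), ∃ C > (0 : ℝ),
      ∀ u : EuclideanSpace ℝ (Fin N) → ℝ → ℝ,
        IsDampedWaveSolution 3 Ω a R₀ u →
        (∀ j ∈ Finset.range 3,
          IntegrableOn (fun x => ‖iteratedFDeriv ℝ j (fun y => u y 0) x‖ ^ 2) Ω) →
        (∀ j ∈ Finset.range 2,
          IntegrableOn (fun x => ‖iteratedFDeriv ℝ j (fun y => deriv (u y) 0) x‖ ^ 2) Ω) →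
        ∀ t ≥ (0 : ℝ),
          Real.sqrt (∫ x in Ω, a x * (u x t) ^ 2)
            ≤ C * (1 + t) ^ (-(((N : ℝ) + α) / (2 * (2 + α))))
              * Real.sqrt (sobNormSq 2 Ω (fun x => u x 0)
                  + sobNormSq 1 Ω (fun x => deriv (u x) 0))) := by
  have ha' := ha.continuousOn
  have h2α : 0 < 2 + α := by linarith
  have hm : ((N : ℝ) + α) / (2 * (2 + α)) = ((N : ℝ) + α) / (2 + α) / 2 := by
    rw [div_div, mul_comm]
  constructor
  · intro δ hδ R₀ _
    have hpos : 0 < ((N : ℝ) + α) / (2 + α) := by positivity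
    obtain ⟨C, hC, hdecay⟩ := exists_rpow_mul_setIntegral_le hα (by omega) hΩopen ha' hapos ha₀
      halim (le_max_right (((N : ℝ) + α) / (2 + α) - 2 * δ) 0)
      (max_lt (by linarith) hpos) R₀
    refine ⟨√C, Real.sqrt_pos.2 hC, fun u hu _ _ t ht =>
      sqrt_le_of_rpow_mul_le ht hC.le (hdecay u hu t ht) ?_⟩
    have := le_max_left (((N : ℝ) + α) / (2 + α) - 2 * δ) 0
    rw [hm]
    linarith
  · intro hN2 R₀ _
    obtain ⟨C, hC, hdecay⟩ := exists_one_add_mul_setIntegral_le hα hN2 hΩopen h0 ha' hapos ha₀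
      halim R₀
    refine ⟨√C, Real.sqrt_pos.2 hC, fun u hu _ _ t ht =>
      sqrt_le_of_rpow_mul_le ht hC.le (hdecay u hu t ht) ?_⟩
    rw [hm, hN2, Nat.cast_ofNat, div_self h2α.ne']
    norm_num
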